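/- arXiv:0901.0391 — 4 statements merged into one kernel-verified Lean document; each statement's English description precedes it below -/
import Mathlib

section
/- Let W be the Coxeter group of type Bₙ (n ≥ 2) with simple generators s₁, …, sₙ, Coxeter matrix m(i,i+1) = 3 for 1 ≤ i ≤ n−2, m(n−1,n) = 4, and m(i,j) = 2 for all other pairs i ≠ j, and length function ℓ. Then the set of elements w ∈ W having no right descent in {2, 3, …, n} is exactly the set of 2n elements {1, s₁, s₂s₁, s₃s₂s₁, …, sₙsₙ₋₁⋯s₁, sₙ₋₁sₙsₙ₋₁⋯s₁, sₙ₋₂sₙ₋₁sₙsₙ₋₁⋯s₁, …, s₁s₂⋯sₙ₋₁sₙsₙ₋₁⋯s₁}, and these 2n elements are pairwise distinct. Moreover, for 1 ≤ j ≤ n the set of left descents of sⱼsⱼ₋₁⋯s₁ is exactly {j}, and for 1 ≤ j ≤ n−1 the set of left descents of sⱼsⱼ₊₁⋯sₙ₋₁sₙsₙ₋₁⋯s₁ is exactly {j}. -/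
/-- The element `s_j * s_{j-1} * ⋯ * s_1` of a Coxeter group whose simple
generators are indexed by `Fin n`, where the generator `sᵢ` (for `1 ≤ i ≤ n`)
is `cs.simple ⟨i - 1, _⟩`.  For `j = 0` this is the identity. -/
def descendingWord {n : ℕ} {W : Type*} [Group W] {M : CoxeterMatrix (Fin n)}
    (cs : CoxeterSystem M W) : ℕ → W
  | 0 => 1
  | j + 1 => (if h : j < n then cs.simple ⟨j, h⟩ else 1) * descendingWord cs j

/-- The element `s_{n-m} * s_{n-m+1} * ⋯ * s_{n-1} * s_n * s_{n-1} * ⋯ * s_1`: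
`hookWord cs 0 = sₙsₙ₋₁⋯s₁` and `hookWord cs (m+1) = s_{n-m-1} * hookWord cs m`,
where the generator `sᵢ` (`1 ≤ i ≤ n`) is `cs.simple ⟨i - 1, _⟩`. -/
def hookWord {n : ℕ} {W : Type*} [Group W] {M : CoxeterMatrix (Fin n)}
    (cs : CoxeterSystem M W) : ℕ → W
  | 0 => descendingWord cs n
  | m + 1 => (if h : n - 2 - m < n then cs.simple ⟨n - 2 - m, h⟩ else 1) * hookWord cs m

/-!
`W` acts on the signed basis vectors `±e₁, …, ±eₙ`: for `i < n` the generator `sᵢ` exchanges `eᵢ`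
and `eᵢ₊₁`, while `sₙ` negates `eₙ`. Along `e₁, …, eₙ, -eₙ, …, -e₁` each generator moves a vector
by at most one place, so the length of `w` is at least the position of `w e₁`. The `2n` listed
elements carry `e₁` to the `2n` vectors along shortest possible words. Multiplying one of them on
the left by `sᵢ` either gives a listed element again or amounts to multiplying it on the right by
one of `s₂, …, sₙ`. Hence every `w` is a listed element times a word in `s₂, …, sₙ`, without
increase in the number of letters, and it has no right descent there exactly when that word is
empty.
-/

section Involutions

variable {G : Type*} [Group G]

lemma mul_pow_four_eq_one_of_commute {a b : G} (ha : a * a = 1) (hb : b * b = 1)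
    (h : Commute (a * b * a) b) : (a * b) ^ 4 = 1 := by
  calc (a * b) ^ 4 = (a * b * a * b) ^ 2 := by
        simp only [pow_succ, pow_zero, one_mul, mul_assoc]
    _ = (a * b * a) ^ 2 * b ^ 2 := h.mul_pow 2
    _ = a * (b * (a * a) * b) * a := by
        rw [pow_two b, hb]
        simp only [pow_two, mul_one, mul_assoc]
    _ = 1 := by rw [ha, mul_one, hb, mul_one, ha]

lemma isLiftable_of_lt {B : Type*} [LinearOrder B] {M : CoxeterMatrix B} {f : B → G}
    (hf : ∀ i, f i * f i = 1) (h : ∀ i j, i < j → (f i * f j) ^ M i j = 1) :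
    M.IsLiftable f := by
  intro i j
  obtain hij | rfl | hij := lt_trichotomy i j
  · exact h i j hij
  · rw [M.diagonal, pow_one, hf]
  · have hinv : f i * f j = (f j * f i)⁻¹ := by
      rw [mul_inv_rev, inv_eq_of_mul_eq_one_left (hf i), inv_eq_of_mul_eq_one_left (hf j)]
    rw [hinv, inv_pow, M.symmetric, h j i hij, inv_one]

end Involutions

section BraidRelations

variable {B W : Type*} [Group W] {M : CoxeterMatrix B} (cs : CoxeterSystem M W) {i j : B}

lemma commute_simple_of_eq_two (h : M i j = 2) : Commute (cs.simple i) (cs.simple j) := by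
  rw [commute_iff_eq]
  simpa [CoxeterSystem.braidWord, CoxeterSystem.alternatingWord, cs.wordProd_cons, M.symmetric j i,
    h] using cs.wordProd_braidWord_eq i j

lemma semiconjBy_simple_of_eq_three (h : M i j = 3) :
    SemiconjBy (cs.simple i * cs.simple j) (cs.simple i) (cs.simple j) := by
  simpa [CoxeterSystem.braidWord, CoxeterSystem.alternatingWord, cs.wordProd_cons, M.symmetric j i,
    h, SemiconjBy, mul_assoc] using cs.wordProd_braidWord_eq j i

lemma commute_simple_of_eq_four (h : M i j = 4) :
    Commute (cs.simple i * cs.simple j * cs.simple i) (cs.simple j) := by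
  simpa [CoxeterSystem.braidWord, CoxeterSystem.alternatingWord, cs.wordProd_cons, M.symmetric j i,
    h, Commute, SemiconjBy, mul_assoc] using cs.wordProd_braidWord_eq i j

end BraidRelations

/-- A certificate that `c` is the section of minimal coset representatives of `W` modulo the
parabolic subgroup generated by `J`, in which only simple generators have to be examined. The coset
space is modelled by a set `X` with an action `φ` and a base point `x₀` fixed by `J`, and `rank` is
the prospective length of the representative. The field `simple_mul` is Deodhar's alternative. -/
structure IsMinimalCosetSection {B W X : Type*} [Group W] {M : CoxeterMatrix B}
    (cs : CoxeterSystem M W) (J : Set B) (φ : W →* Equiv.Perm X) (x₀ : X) (rank : X → ℕ)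
    (c : X → W) : Prop where
  apply_base : ∀ j ∈ J, φ (cs.simple j) x₀ = x₀
  rank_base : rank x₀ = 0
  section_base : c x₀ = 1
  rank_simple_le : ∀ i x, rank (φ (cs.simple i) x) ≤ rank x + 1
  exists_rank_simple_lt : ∀ x, x ≠ x₀ → ∃ i, rank (φ (cs.simple i) x) < rank x
  simple_mul : ∀ i x, cs.simple i * c x = c (φ (cs.simple i) x) ∨
    φ (cs.simple i) x = x ∧ ∃ j ∈ J, SemiconjBy (c x) (cs.simple j) (cs.simple i)

namespace IsMinimalCosetSection

variable {B W X : Type*} [Group W] {M : CoxeterMatrix B} {cs : CoxeterSystem M W} {J : Set B}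
  {φ : W →* Equiv.Perm X} {x₀ : X} {rank : X → ℕ} {c : X → W}
  (h : IsMinimalCosetSection cs J φ x₀ rank c)

include h

lemma simple_mul_of_ne {i : B} {x : X} (hx : φ (cs.simple i) x ≠ x) :
    cs.simple i * c x = c (φ (cs.simple i) x) :=
  (h.simple_mul i x).resolve_right fun hfix ↦ hx hfix.1

lemma exists_eq_simple_mul {x : X} (hx : x ≠ x₀) :
    ∃ i y, rank y < rank x ∧ φ (cs.simple i) y = x ∧ c x = cs.simple i * c y := by
  obtain ⟨i, hi⟩ := h.exists_rank_simple_lt x hx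
  have hne : φ (cs.simple i) x ≠ x := fun heq ↦ (heq ▸ hi).false
  refine ⟨i, φ (cs.simple i) x, hi, ?_, ?_⟩
  · rw [← Equiv.Perm.mul_apply, ← map_mul, cs.simple_mul_simple_self, map_one, Equiv.Perm.one_apply]
  · rw [← h.simple_mul_of_ne hne, cs.simple_mul_simple_cancel_left]

lemma map_section_apply_base (x : X) : φ (c x) x₀ = x := by
  induction hr : rank x using Nat.strong_induction_on generalizing x with
  | _ r ih =>
    obtain rfl | hx := eq_or_ne x x₀
    · rw [h.section_base, map_one, Equiv.Perm.one_apply]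
    · obtain ⟨i, y, hy, hyx, hc⟩ := h.exists_eq_simple_mul hx
      rw [hc, map_mul, Equiv.Perm.mul_apply, ih (rank y) (hr ▸ hy) y rfl, hyx]

lemma length_section_le (x : X) : cs.length (c x) ≤ rank x := by
  induction hr : rank x using Nat.strong_induction_on generalizing x with
  | _ r ih =>
    obtain rfl | hx := eq_or_ne x x₀
    · rw [h.section_base, cs.length_one]
      exact Nat.zero_le r
    · obtain ⟨i, y, hy, -, hc⟩ := h.exists_eq_simple_mul hx
      calc cs.length (c x) ≤ cs.length (cs.simple i) + cs.length (c y) :=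
            hc ▸ cs.length_mul_le _ _
        _ ≤ 1 + rank y := by rw [cs.length_simple]; gcongr; exact ih _ (hr ▸ hy) y rfl
        _ ≤ r := by omega

lemma exists_wordProd_eq_mul (ω : List B) : ∃ τ : List B, (∀ j ∈ τ, j ∈ J) ∧
    cs.wordProd ω = c (φ (cs.wordProd ω) x₀) * cs.wordProd τ ∧
    rank (φ (cs.wordProd ω) x₀) + τ.length ≤ ω.length := by
  induction ω with
  | nil => exact ⟨[], by simp, by simp [h.section_base], by simp [h.rank_base]⟩
  | cons i ω ih =>
    obtain ⟨τ, hτ, hω, hlen⟩ := ih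
    set x := φ (cs.wordProd ω) x₀
    have hx : φ (cs.wordProd (i :: ω)) x₀ = φ (cs.simple i) x := by
      rw [cs.wordProd_cons, map_mul, Equiv.Perm.mul_apply]
    rw [hx, cs.wordProd_cons, hω, List.length_cons]
    obtain hmove | ⟨hfix, j, hj, hsemi⟩ := h.simple_mul i x
    · refine ⟨τ, hτ, by rw [← hmove, mul_assoc], ?_⟩
      have := h.rank_simple_le i x
      omega
    · refine ⟨j :: τ, List.forall_mem_cons.2 ⟨hj, hτ⟩, ?_, ?_⟩
      · rw [hfix, cs.wordProd_cons, ← mul_assoc, ← hsemi.eq, mul_assoc]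
      · rw [hfix, List.length_cons]
        omega

lemma exists_eq_section_mul (w : W) : ∃ τ : List B, (∀ j ∈ τ, j ∈ J) ∧
    w = c (φ w x₀) * cs.wordProd τ ∧ rank (φ w x₀) + τ.length ≤ cs.length w := by
  obtain ⟨ω, hω, rfl⟩ := cs.exists_isReduced w
  rw [hω.eq]
  exact h.exists_wordProd_eq_mul ω

lemma rank_apply_base_le_length (w : W) : rank (φ w x₀) ≤ cs.length w := by
  obtain ⟨τ, -, -, hlen⟩ := h.exists_eq_section_mul w
  omega

lemma length_section (x : X) : cs.length (c x) = rank x := by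
  refine (h.length_section_le x).antisymm ?_
  simpa only [h.map_section_apply_base] using h.rank_apply_base_le_length (c x)

lemma not_isRightDescent_section (x : X) {j : B} (hj : j ∈ J) :
    ¬ cs.IsRightDescent (c x) j := by
  have hle := h.rank_apply_base_le_length (c x * cs.simple j)
  rw [map_mul, Equiv.Perm.mul_apply, h.apply_base j hj, h.map_section_apply_base] at hle
  rw [CoxeterSystem.IsRightDescent, h.length_section]
  exact hle.not_gt

lemma eq_section_of_forall_not_isRightDescent {w : W} (hw : ∀ j ∈ J, ¬ cs.IsRightDescent w j) :
    w = c (φ w x₀) := by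
  obtain ⟨τ, hτ, hprod, hlen⟩ := h.exists_eq_section_mul w
  obtain rfl | ⟨τ, j, rfl⟩ := τ.eq_nil_or_concat'
  · simpa only [cs.wordProd_nil, mul_one] using hprod
  · refine absurd ?_ (hw j (hτ j (by simp)))
    have hwj : w * cs.simple j = c (φ w x₀) * cs.wordProd τ := by
      nth_rw 1 [hprod]
      rw [cs.wordProd_append, cs.wordProd_singleton, ← mul_assoc,
        cs.simple_mul_simple_cancel_right]
    rw [List.length_append, List.length_singleton] at hlen
    calc cs.length (w * cs.simple j) ≤ cs.length (c (φ w x₀)) + cs.length (cs.wordProd τ) :=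
          hwj ▸ cs.length_mul_le _ _
      _ ≤ rank (φ w x₀) + τ.length := add_le_add (h.length_section_le _) (cs.length_wordProd_le τ)
      _ < cs.length w := by omega

theorem setOf_forall_not_isRightDescent :
    {w | ∀ j ∈ J, ¬ cs.IsRightDescent w j} = Set.range c := by
  ext w
  refine ⟨fun hw ↦ ⟨_, (h.eq_section_of_forall_not_isRightDescent hw).symm⟩, ?_⟩
  rintro ⟨x, rfl⟩ j hj
  exact h.not_isRightDescent_section x hj

theorem isLeftDescent_section_iff (i : B) (x : X) :
    cs.IsLeftDescent (c x) i ↔ rank (φ (cs.simple i) x) < rank x := by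
  rw [CoxeterSystem.IsLeftDescent, h.length_section]
  refine ⟨fun hlt ↦ lt_of_le_of_lt ?_ hlt, fun hlt ↦ ?_⟩
  · simpa only [map_mul, Equiv.Perm.mul_apply, h.map_section_apply_base] using
      h.rank_apply_base_le_length (cs.simple i * c x)
  · rwa [h.simple_mul_of_ne fun heq ↦ (heq ▸ hlt).false, h.length_section]

end IsMinimalCosetSection

namespace TypeB

open Equiv (swap)

variable {n : ℕ}

section CoxeterMatrixB

variable {i j : Fin n}

lemma coxeterMatrixB_apply_of_ne (h : i ≠ j) :
    CoxeterMatrix.B n i j = if (i : ℕ) + 1 = (j : ℕ) ∨ (j : ℕ) + 1 = (i : ℕ) then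
      (if (i : ℕ) = n - 1 ∨ (j : ℕ) = n - 1 then 4 else 3) else 2 := by
  simp only [CoxeterMatrix.B, Matrix.of_apply, if_neg h]
  split_ifs <;> omega

lemma coxeterMatrixB_of_lt (h : (i : ℕ) + 1 < j) : CoxeterMatrix.B n i j = 2 := by
  rw [coxeterMatrixB_apply_of_ne (by omega), if_neg (by omega)]

lemma coxeterMatrixB_of_succ (h : (i : ℕ) + 1 = j) (hj : (j : ℕ) + 1 < n) :
    CoxeterMatrix.B n i j = 3 := by
  rw [coxeterMatrixB_apply_of_ne (by omega), if_pos (by omega), if_neg (by omega)]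

lemma coxeterMatrixB_of_last (h : (i : ℕ) + 1 = j) (hj : (j : ℕ) + 1 = n) :
    CoxeterMatrix.B n i j = 4 := by
  rw [coxeterMatrixB_apply_of_ne (by omega), if_pos (by omega), if_pos (by omega)]

lemma eq_coxeterMatrixB {M : CoxeterMatrix (Fin n)}
    (hM : ∀ i j : Fin n, i ≠ j →
      M i j = if (i : ℕ) + 1 = (j : ℕ) ∨ (j : ℕ) + 1 = (i : ℕ) then
        (if (i : ℕ) = n - 1 ∨ (j : ℕ) = n - 1 then 4 else 3) else 2) :
    M = CoxeterMatrix.B n := by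
  ext i j
  obtain rfl | hij := eq_or_ne i j
  · rw [M.diagonal, CoxeterMatrix.diagonal]
  · rw [hM i j hij, coxeterMatrixB_apply_of_ne hij]

end CoxeterMatrixB

/-- The action of the `i`-th simple reflection, counted from `0`, on the signed basis vectors:
`Sum.inl k` stands for `e_k` and `Sum.inr k` for `-e_k`. -/
def signedReflection (i : Fin n) : Equiv.Perm (Fin n ⊕ Fin n) :=
  if h : (i : ℕ) + 1 < n then
    Equiv.Perm.sumCongrHom _ _ (swap i ⟨i + 1, h⟩, swap i ⟨i + 1, h⟩)
  else swap (.inl i) (.inr i)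

section SignedReflection

variable {i j k : Fin n}

lemma signedReflection_of_succ (h : (i : ℕ) + 1 = j) :
    signedReflection i = Equiv.Perm.sumCongrHom _ _ (swap i j, swap i j) := by
  have hj : j = ⟨i + 1, h ▸ j.isLt⟩ := Fin.ext h.symm
  rw [hj]
  exact dif_pos _

lemma signedReflection_of_last (h : (i : ℕ) + 1 = n) :
    signedReflection i = swap (.inl i) (.inr i) :=
  dif_neg h.not_lt

lemma exists_succ_eq_or_last (i : Fin n) : (∃ j : Fin n, (i : ℕ) + 1 = j) ∨ (i : ℕ) + 1 = n := by
  obtain h | h := Nat.lt_or_eq_of_le i.isLt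
  · exact .inl ⟨⟨i + 1, h⟩, rfl⟩
  · exact .inr h

lemma signedReflection_inl_self (h : (i : ℕ) + 1 = j) :
    signedReflection i (.inl i) = .inl j := by
  simp [signedReflection_of_succ h]

lemma signedReflection_inr_self (h : (i : ℕ) + 1 = j) :
    signedReflection i (.inr i) = .inr j := by
  simp [signedReflection_of_succ h]

lemma signedReflection_inl_succ (h : (i : ℕ) + 1 = j) :
    signedReflection i (.inl j) = .inl i := by
  simp [signedReflection_of_succ h]

lemma signedReflection_inr_succ (h : (i : ℕ) + 1 = j) :
    signedReflection i (.inr j) = .inr i := by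
  simp [signedReflection_of_succ h]

lemma signedReflection_inl_last (h : (i : ℕ) + 1 = n) :
    signedReflection i (.inl i) = .inr i := by
  rw [signedReflection_of_last h, Equiv.swap_apply_left]

lemma signedReflection_inr_last (h : (i : ℕ) + 1 = n) :
    signedReflection i (.inr i) = .inl i := by
  rw [signedReflection_of_last h, Equiv.swap_apply_right]

lemma signedReflection_inl_of_ne (hi : k ≠ i) (hs : (i : ℕ) + 1 ≠ k) :
    signedReflection i (.inl k) = .inl k := by
  obtain ⟨j, hj⟩ | hl := exists_succ_eq_or_last i
  · have hkj : k ≠ j := by rintro rfl; exact hs hj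
    simp [signedReflection_of_succ hj, Equiv.swap_apply_of_ne_of_ne hi hkj]
  · rw [signedReflection_of_last hl, Equiv.swap_apply_of_ne_of_ne (by simpa using hi) (by simp)]

lemma signedReflection_inr_of_ne (hi : k ≠ i) (hs : (i : ℕ) + 1 ≠ k) :
    signedReflection i (.inr k) = .inr k := by
  obtain ⟨j, hj⟩ | hl := exists_succ_eq_or_last i
  · have hkj : k ≠ j := by rintro rfl; exact hs hj
    simp [signedReflection_of_succ hj, Equiv.swap_apply_of_ne_of_ne hi hkj]
  · rw [signedReflection_of_last hl, Equiv.swap_apply_of_ne_of_ne (by simp) (by simpa using hi)]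

lemma signedReflection_mul_self (i : Fin n) : signedReflection i * signedReflection i = 1 := by
  obtain ⟨j, hj⟩ | hl := exists_succ_eq_or_last i
  · rw [signedReflection_of_succ hj, ← map_mul, Prod.mk_mul_mk, Equiv.swap_mul_self,
      Prod.mk_one_one, map_one]
  · rw [signedReflection_of_last hl, Equiv.swap_mul_self]

lemma signedReflection_commute (h : (i : ℕ) + 1 < j) :
    Commute (signedReflection i) (signedReflection j) := by
  refine Equiv.Perm.Disjoint.commute ?_
  rintro (k | k) <;> obtain hk | hk := le_or_gt (k : ℕ) (i + 1)
  · exact .inr (signedReflection_inl_of_ne (by omega) (by omega))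
  · exact .inl (signedReflection_inl_of_ne (by omega) (by omega))
  · exact .inr (signedReflection_inr_of_ne (by omega) (by omega))
  · exact .inl (signedReflection_inr_of_ne (by omega) (by omega))

lemma signedReflection_mul_pow_three (h : (i : ℕ) + 1 = j) (hj : (j : ℕ) + 1 < n) :
    (signedReflection i * signedReflection j) ^ 3 = 1 := by
  have hcycle : (swap i j * swap j ⟨j + 1, hj⟩).IsThreeCycle := by
    rw [Equiv.swap_comm i j]
    refine Equiv.Perm.isThreeCycle_swap_mul_swap_same ?_ ?_ ?_ <;>
      exact Fin.ne_of_val_ne (by simp only [ne_eq]; omega)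
  rw [signedReflection_of_succ h, signedReflection_of_succ (j := ⟨j + 1, hj⟩) rfl, ← map_mul,
    Prod.mk_mul_mk, ← map_pow, Prod.pow_mk, ← hcycle.orderOf, pow_orderOf_eq_one, Prod.mk_one_one,
    map_one]

lemma signedReflection_mul_pow_four (h : (i : ℕ) + 1 = j) (hj : (j : ℕ) + 1 = n) :
    (signedReflection i * signedReflection j) ^ 4 = 1 := by
  refine mul_pow_four_eq_one_of_commute (signedReflection_mul_self i)
    (signedReflection_mul_self j) ?_
  have hconj : signedReflection i * signedReflection j * signedReflection i =
      swap (.inl i) (.inr i) := by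
    rw [signedReflection_of_last hj, Equiv.mul_swap_eq_swap_mul, mul_assoc,
      signedReflection_mul_self, mul_one, signedReflection_inl_succ h, signedReflection_inr_succ h]
  have hij : i ≠ j := by rintro rfl; omega
  rw [hconj, signedReflection_of_last hj]
  exact (Equiv.Perm.disjoint_swap_swap (by simp [hij])).commute

theorem isLiftable_signedReflection :
    (CoxeterMatrix.B n).IsLiftable (signedReflection (n := n)) := by
  refine isLiftable_of_lt signedReflection_mul_self fun i j hij ↦ ?_
  obtain h | h := Nat.lt_or_eq_of_le (Nat.succ_le_of_lt hij)
  · rw [coxeterMatrixB_of_lt h, (signedReflection_commute h).mul_pow, pow_two, pow_two,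
      signedReflection_mul_self, signedReflection_mul_self, one_mul]
  · obtain hj | hj := Nat.lt_or_eq_of_le j.isLt
    · rw [coxeterMatrixB_of_succ h hj, signedReflection_mul_pow_three h hj]
    · rw [coxeterMatrixB_of_last h hj, signedReflection_mul_pow_four h hj]

end SignedReflection

/-- The position of a signed basis vector in the order `e₀, …, eₙ₋₁, -eₙ₋₁, …, -e₀`. -/
def position : Fin n ⊕ Fin n → ℕ :=
  Sum.elim (fun k ↦ k) fun k ↦ 2 * n - 1 - k

section Position

lemma position_inl (k : Fin n) : position (.inl k) = k := rfl

lemma position_inr (k : Fin n) : position (.inr k) = 2 * n - 1 - k := rfl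

lemma position_signedReflection_inl (i k : Fin n) :
    position (signedReflection i (.inl k)) =
      if k = i then (k : ℕ) + 1 else if (i : ℕ) + 1 = k then (i : ℕ) else k := by
  split_ifs with hi hs
  · subst hi
    obtain ⟨j, hj⟩ | hl := exists_succ_eq_or_last k
    · rw [signedReflection_inl_self hj, position_inl, hj]
    · rw [signedReflection_inl_last hl, position_inr]
      omega
  · rw [signedReflection_inl_succ hs, position_inl]
  · rw [signedReflection_inl_of_ne hi hs, position_inl]

lemma position_signedReflection_inr (i k : Fin n) :
    position (signedReflection i (.inr k)) =
      if k = i then 2 * n - 2 - k else if (i : ℕ) + 1 = k then 2 * n - k else 2 * n - 1 - k := by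
  split_ifs with hi hs
  · subst hi
    obtain ⟨j, hj⟩ | hl := exists_succ_eq_or_last k
    · rw [signedReflection_inr_self hj, position_inr]
      omega
    · rw [signedReflection_inr_last hl, position_inl]
      omega
  · rw [signedReflection_inr_succ hs, position_inr]
    omega
  · rw [signedReflection_inr_of_ne hi hs, position_inr]

lemma position_signedReflection_le (i : Fin n) (x : Fin n ⊕ Fin n) :
    position (signedReflection i x) ≤ position x + 1 := by
  obtain k | k := x
  · rw [position_signedReflection_inl, position_inl]
    split_ifs <;> omega
  · rw [position_signedReflection_inr, position_inr]
    split_ifs <;> omega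

lemma position_signedReflection_lt_iff (i : Fin n) (x : Fin n ⊕ Fin n) :
    position (signedReflection i x) < position x ↔
      (i : ℕ) + 1 = position x ∨ (i : ℕ) + 1 + position x = 2 * n := by
  obtain k | k := x
  · rw [position_signedReflection_inl, position_inl]
    split_ifs <;> omega
  · rw [position_signedReflection_inr, position_inr]
    split_ifs <;> omega

lemma exists_position_signedReflection_lt {x : Fin n ⊕ Fin n} (hx : position x ≠ 0) :
    ∃ i, position (signedReflection i x) < position x := by
  simp only [position_signedReflection_lt_iff]
  obtain k | k := x
  · rw [position_inl] at hx ⊢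
    exact ⟨⟨k - 1, by omega⟩, .inl (Nat.sub_add_cancel (Nat.pos_of_ne_zero hx))⟩
  · refine ⟨k, .inr ?_⟩
    rw [position_inr]
    omega

lemma position_eq_zero_iff (hn : 0 < n) {x : Fin n ⊕ Fin n} :
    position x = 0 ↔ x = .inl ⟨0, hn⟩ := by
  obtain k | k := x
  · rw [position_inl, Sum.inl.injEq, Fin.ext_iff]
  · rw [position_inr]
    simp only [reduceCtorEq, iff_false]
    omega

end Position

variable {W : Type*} [Group W]

section Words

variable {M : CoxeterMatrix (Fin n)} (cs : CoxeterSystem M W)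

lemma descendingWord_of_succ {i : Fin n} {k : ℕ} (h : (i : ℕ) + 1 = k) :
    descendingWord cs k = cs.simple i * descendingWord cs i := by
  rw [← h, descendingWord, dif_pos i.isLt]

lemma hookWord_succ {i : Fin n} {m : ℕ} (h : (i : ℕ) + m + 2 = n) :
    hookWord cs (m + 1) = cs.simple i * hookWord cs m := by
  have hi : n - 2 - m = i := by omega
  simp only [hookWord, hi, i.isLt, dite_true]

end Words

variable (cs : CoxeterSystem (CoxeterMatrix.B n) W)

section Commutation

variable {i j : Fin n} {k m : ℕ}

lemma commute_simple (h : (i : ℕ) + 1 < j) : Commute (cs.simple i) (cs.simple j) :=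
  commute_simple_of_eq_two cs (coxeterMatrixB_of_lt h)

lemma commute_descendingWord (h : k < i) : Commute (descendingWord cs k) (cs.simple i) := by
  induction k with
  | zero => exact Commute.one_left _
  | succ k ih =>
    let k' : Fin n := ⟨k, by omega⟩
    rw [descendingWord_of_succ cs (i := k') rfl]
    exact (commute_simple cs (i := k') h).mul_left (ih (by omega))

lemma semiconjBy_descendingWord (hij : (i : ℕ) + 1 = j) (hj : (j : ℕ) + 1 < n) (hjk : (j : ℕ) < k)
    (hk : k ≤ n) : SemiconjBy (descendingWord cs k) (cs.simple j) (cs.simple i) := by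
  induction k, hjk using Nat.le_induction with
  | base =>
    have hbraid : SemiconjBy (cs.simple j * cs.simple i) (cs.simple j) (cs.simple i) :=
      semiconjBy_simple_of_eq_three cs <|
        (CoxeterMatrix.symmetric _ j i).trans (coxeterMatrixB_of_succ hij hj)
    rw [descendingWord_of_succ cs rfl, descendingWord_of_succ cs hij, ← mul_assoc]
    exact hbraid.mul_left (commute_descendingWord cs (by omega))
  | succ k hjk ih =>
    let k' : Fin n := ⟨k, hk⟩
    have hik : Commute (cs.simple k') (cs.simple i) :=
      (commute_simple cs (show (i : ℕ) + 1 < k by omega)).symm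
    rw [descendingWord_of_succ cs (i := k') rfl]
    exact SemiconjBy.mul_left hik (ih (by omega))

lemma semiconjBy_hookWord (hij : (i : ℕ) + 1 = j) (hj : (j : ℕ) + m + 1 < n) :
    SemiconjBy (hookWord cs m) (cs.simple j) (cs.simple i) := by
  induction m with
  | zero => exact semiconjBy_descendingWord cs hij hj j.isLt le_rfl
  | succ m ih =>
    let a : Fin n := ⟨n - 2 - m, by omega⟩
    have hia : Commute (cs.simple a) (cs.simple i) :=
      (commute_simple cs (show (i : ℕ) + 1 < n - 2 - m by omega)).symm
    rw [hookWord_succ cs (i := a) (show n - 2 - m + m + 2 = n by omega)]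
    exact SemiconjBy.mul_left hia (ih (by omega))

lemma commute_hookWord_one (hij : (i : ℕ) + 1 = j) (hj : (j : ℕ) + 1 = n) :
    Commute (hookWord cs 1) (cs.simple j) := by
  have hword : hookWord cs 1 =
      cs.simple i * cs.simple j * cs.simple i * descendingWord cs i := by
    rw [hookWord_succ cs (i := i) (by omega), hookWord, descendingWord_of_succ cs hj,
      descendingWord_of_succ cs hij, ← mul_assoc, ← mul_assoc]
  rw [hword]
  exact (commute_simple_of_eq_four cs (coxeterMatrixB_of_last hij hj)).mul_left
    (commute_descendingWord cs (by omega))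

lemma commute_hookWord_add_two (hij : (i : ℕ) + 1 = j) (hj : (j : ℕ) + m + 2 = n) :
    Commute (hookWord cs (m + 2)) (cs.simple j) := by
  have hbraid : SemiconjBy (cs.simple i * cs.simple j) (cs.simple i) (cs.simple j) :=
    semiconjBy_simple_of_eq_three cs (coxeterMatrixB_of_succ hij (by omega))
  rw [hookWord_succ cs (i := i) (by omega), hookWord_succ cs hj, ← mul_assoc]
  exact hbraid.mul_left (semiconjBy_hookWord cs hij (by omega))

lemma commute_hookWord (hi : n ≤ i + m) (hm : m < n) :
    Commute (hookWord cs m) (cs.simple i) := by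
  induction m with
  | zero => omega
  | succ m ih =>
    let a : Fin n := ⟨n - 2 - m, by omega⟩
    have ha : (a : ℕ) + m + 2 = n := show n - 2 - m + m + 2 = n by omega
    obtain hai | hai : (a : ℕ) + 1 < i ∨ (a : ℕ) + 1 = i := by omega
    · rw [hookWord_succ cs ha]
      exact (commute_simple cs hai).mul_left (ih (by omega) (by omega))
    · cases m with
      | zero => exact commute_hookWord_one cs hai (by omega)
      | succ m => exact commute_hookWord_add_two cs hai (by omega)

end Commutation

/-- The action of the Coxeter group of type `B` on the signed basis vectors. -/
def signedAction : W →* Equiv.Perm (Fin n ⊕ Fin n) :=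
  cs.lift ⟨signedReflection, isLiftable_signedReflection⟩

lemma signedAction_simple (i : Fin n) : signedAction cs (cs.simple i) = signedReflection i :=
  cs.lift_apply_simple isLiftable_signedReflection i

/-- The minimal coset representative carrying `e₀` to the given signed basis vector. It is
`s_{k-1} ⋯ s₀` for `e_k` and `s_k ⋯ s_{n-1} ⋯ s₀` for `-e_k`. -/
def cosetRep : Fin n ⊕ Fin n → W :=
  Sum.elim (fun k ↦ descendingWord cs k) fun k ↦ hookWord cs (n - 1 - k)

section CosetRep

variable {i j : Fin n}

lemma cosetRep_inl (k : Fin n) : cosetRep cs (.inl k) = descendingWord cs k := rfl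

lemma cosetRep_inr (k : Fin n) : cosetRep cs (.inr k) = hookWord cs (n - 1 - k) := rfl

lemma cosetRep_inr_of_last (h : (i : ℕ) + 1 = n) : cosetRep cs (.inr i) = descendingWord cs n := by
  rw [cosetRep_inr, show n - 1 - i = 0 by omega, hookWord]

lemma simple_mul_cosetRep_inl_of_succ (h : (i : ℕ) + 1 = j) :
    cs.simple i * cosetRep cs (.inl i) = cosetRep cs (.inl j) :=
  (descendingWord_of_succ cs h).symm

lemma simple_mul_cosetRep_inl_of_last (h : (i : ℕ) + 1 = n) :
    cs.simple i * cosetRep cs (.inl i) = cosetRep cs (.inr i) := by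
  rw [cosetRep_inr_of_last cs h, descendingWord_of_succ cs h, cosetRep_inl]

lemma simple_mul_cosetRep_inr_of_succ (h : (i : ℕ) + 1 = j) :
    cs.simple i * cosetRep cs (.inr j) = cosetRep cs (.inr i) := by
  rw [cosetRep_inr, cosetRep_inr, show n - 1 - (i : ℕ) = n - 1 - j + 1 by omega,
    hookWord_succ cs (i := i) (by omega)]

lemma simple_mul_cosetRep_inl (i k : Fin n) :
    cs.simple i * cosetRep cs (.inl k) = cosetRep cs (signedReflection i (.inl k)) ∨
      signedReflection i (.inl k) = .inl k ∧ ∃ j : Fin n, (j : ℕ) ≠ 0 ∧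
        SemiconjBy (cosetRep cs (.inl k)) (cs.simple j) (cs.simple i) := by
  obtain hk | rfl | hk | hk : (k : ℕ) < i ∨ k = i ∨ (i : ℕ) + 1 = k ∨ (i : ℕ) + 1 < k := by omega
  · exact .inr ⟨signedReflection_inl_of_ne (by omega) (by omega), i, by omega,
      commute_descendingWord cs hk⟩
  · left
    obtain ⟨j, hj⟩ | hl := exists_succ_eq_or_last k
    · rw [simple_mul_cosetRep_inl_of_succ cs hj, signedReflection_inl_self hj]
    · rw [simple_mul_cosetRep_inl_of_last cs hl, signedReflection_inl_last hl]
  · left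
    rw [signedReflection_inl_succ hk, ← simple_mul_cosetRep_inl_of_succ cs hk,
      cs.simple_mul_simple_cancel_left]
  · let j : Fin n := ⟨i + 1, by omega⟩
    exact .inr ⟨signedReflection_inl_of_ne (by omega) (by omega), j, i.val.succ_ne_zero,
      semiconjBy_descendingWord cs rfl (show (i : ℕ) + 1 + 1 < n by omega) hk k.isLt.le⟩

lemma simple_mul_cosetRep_inr (i k : Fin n) :
    cs.simple i * cosetRep cs (.inr k) = cosetRep cs (signedReflection i (.inr k)) ∨
      signedReflection i (.inr k) = .inr k ∧ ∃ j : Fin n, (j : ℕ) ≠ 0 ∧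
        SemiconjBy (cosetRep cs (.inr k)) (cs.simple j) (cs.simple i) := by
  obtain hk | rfl | hk | hk : (k : ℕ) < i ∨ k = i ∨ (i : ℕ) + 1 = k ∨ (i : ℕ) + 1 < k := by omega
  · exact .inr ⟨signedReflection_inr_of_ne (by omega) (by omega), i, by omega,
      commute_hookWord cs (by omega) (by omega)⟩
  · left
    obtain ⟨j, hj⟩ | hl := exists_succ_eq_or_last k
    · rw [signedReflection_inr_self hj, ← simple_mul_cosetRep_inr_of_succ cs hj,
        cs.simple_mul_simple_cancel_left]
    · rw [signedReflection_inr_last hl, ← simple_mul_cosetRep_inl_of_last cs hl,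
        cs.simple_mul_simple_cancel_left]
  · left
    rw [simple_mul_cosetRep_inr_of_succ cs hk, signedReflection_inr_succ hk]
  · let j : Fin n := ⟨i + 1, by omega⟩
    exact .inr ⟨signedReflection_inr_of_ne (by omega) (by omega), j, i.val.succ_ne_zero,
      semiconjBy_hookWord cs rfl (show (i : ℕ) + 1 + (n - 1 - k) + 1 < n by omega)⟩

theorem isMinimalCosetSection_cosetRep (hn : 0 < n) :
    IsMinimalCosetSection cs {i | (i : ℕ) ≠ 0} (signedAction cs) (.inl ⟨0, hn⟩) position
      (cosetRep cs) where
  apply_base j hj := by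
    rw [signedAction_simple]
    exact signedReflection_inl_of_ne (fun h ↦ hj (Fin.ext_iff.1 h).symm) j.val.succ_ne_zero
  rank_base := rfl
  section_base := rfl
  rank_simple_le i x := by
    rw [signedAction_simple]
    exact position_signedReflection_le i x
  exists_rank_simple_lt x hx := by
    simp only [signedAction_simple]
    exact exists_position_signedReflection_lt ((position_eq_zero_iff hn).not.2 hx)
  simple_mul i x := by
    rw [signedAction_simple]
    obtain k | k := x
    · exact simple_mul_cosetRep_inl cs i k
    · exact simple_mul_cosetRep_inr cs i k

lemma isLeftDescent_cosetRep_iff (i : Fin n) (x : Fin n ⊕ Fin n) :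
    cs.IsLeftDescent (cosetRep cs x) i ↔
      (i : ℕ) + 1 = position x ∨ (i : ℕ) + 1 + position x = 2 * n := by
  rw [(isMinimalCosetSection_cosetRep cs i.pos).isLeftDescent_section_iff, signedAction_simple,
    position_signedReflection_lt_iff]

end CosetRep

section ListedWords

variable {j m : ℕ}

lemma exists_cosetRep_eq_descendingWord (hn : 0 < n) (hj : j ≤ n) :
    ∃ x, position x = j ∧ cosetRep cs x = descendingWord cs j := by
  obtain hj | rfl := hj.lt_or_eq
  · exact ⟨.inl ⟨j, hj⟩, rfl, rfl⟩
  · refine ⟨.inr ⟨j - 1, by omega⟩, ?_, cosetRep_inr_of_last cs (Nat.sub_add_cancel hn)⟩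
    rw [position_inr]
    dsimp only
    omega

lemma exists_cosetRep_eq_hookWord (hm : m < n) :
    ∃ x, position x = n + m ∧ cosetRep cs x = hookWord cs m := by
  refine ⟨.inr ⟨n - 1 - m, by omega⟩, ?_, ?_⟩
  · rw [position_inr]
    dsimp only
    omega
  · rw [cosetRep_inr, Nat.sub_sub_self (Nat.le_sub_one_of_lt hm)]

theorem range_cosetRep (hn : 0 < n) :
    Set.range (cosetRep cs) = {w : W | (∃ j ≤ n, w = descendingWord cs j) ∨
      ∃ m, 1 ≤ m ∧ m ≤ n - 1 ∧ w = hookWord cs m} := by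
  ext w
  constructor
  · rintro ⟨k | k, rfl⟩
    · exact .inl ⟨k, k.isLt.le, cosetRep_inl cs k⟩
    · obtain h | h : (k : ℕ) + 1 = n ∨ 1 ≤ n - 1 - k := by omega
      · exact .inl ⟨n, le_rfl, cosetRep_inr_of_last cs h⟩
      · exact .inr ⟨n - 1 - k, h, Nat.sub_le _ _, cosetRep_inr cs k⟩
  · rintro (⟨j, hj, rfl⟩ | ⟨m, -, hm, rfl⟩)
    · obtain ⟨x, -, hx⟩ := exists_cosetRep_eq_descendingWord cs hn hj
      exact ⟨x, hx⟩
    · obtain ⟨x, -, hx⟩ := exists_cosetRep_eq_hookWord cs (show m < n by omega)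
      exact ⟨x, hx⟩

lemma length_descendingWord (hn : 0 < n) (hj : j ≤ n) :
    cs.length (descendingWord cs j) = j := by
  obtain ⟨x, hpos, hx⟩ := exists_cosetRep_eq_descendingWord cs hn hj
  rw [← hx, (isMinimalCosetSection_cosetRep cs hn).length_section, hpos]

lemma length_hookWord (hm : m < n) : cs.length (hookWord cs m) = n + m := by
  obtain ⟨x, hpos, hx⟩ := exists_cosetRep_eq_hookWord cs hm
  rw [← hx, (isMinimalCosetSection_cosetRep cs (Nat.zero_lt_of_lt hm)).length_section, hpos]

lemma isLeftDescent_descendingWord_iff (hj : j ≤ n) (i : Fin n) :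
    cs.IsLeftDescent (descendingWord cs j) i ↔ (i : ℕ) + 1 = j := by
  obtain ⟨x, hpos, hx⟩ := exists_cosetRep_eq_descendingWord cs i.pos hj
  rw [← hx, isLeftDescent_cosetRep_iff, hpos]
  omega

lemma isLeftDescent_hookWord_iff (hm : m < n) (i : Fin n) :
    cs.IsLeftDescent (hookWord cs m) i ↔ (i : ℕ) + 1 + m = n := by
  obtain ⟨x, hpos, hx⟩ := exists_cosetRep_eq_hookWord cs hm
  rw [← hx, isLeftDescent_cosetRep_iff, hpos]
  omega

end ListedWords

end TypeB

/-- The `{2,…,n}`-positive elements of the Coxeter group of type `Bₙ` (`n ≥ 2`):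
the set of `w` with no right descent in `{2,…,n}` is exactly the `2n` pairwise
distinct elements `{1, s₁, s₂s₁, …, sₙ⋯s₁, sₙ₋₁sₙsₙ₋₁⋯s₁, …, s₁s₂⋯sₙ⋯s₁}`;
the left descent set of `sⱼ⋯s₁` (`1 ≤ j ≤ n`) is `{j}` and the left descent set
of `sⱼsⱼ₊₁⋯sₙ₋₁sₙsₙ₋₁⋯s₁` (`1 ≤ j ≤ n-1`) is `{j}`.  Here the simple generator
`sᵢ` (`1 ≤ i ≤ n`) is `cs.simple ⟨i - 1, _⟩`. -/
theorem typeB_positive_weyl_group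
    (n : ℕ) (hn : 2 ≤ n) {W : Type*} [Group W]
    (M : CoxeterMatrix (Fin n))
    (hM : ∀ i j : Fin n, i ≠ j →
      M i j = if (i : ℕ) + 1 = (j : ℕ) ∨ (j : ℕ) + 1 = (i : ℕ) then
          (if (i : ℕ) = n - 1 ∨ (j : ℕ) = n - 1 then 4 else 3) else 2)
    (cs : CoxeterSystem M W) :
    ({w : W | ∀ i : Fin n, (i : ℕ) ≠ 0 → ¬ cs.IsRightDescent w i}
        = {w : W | (∃ j ≤ n, w = descendingWord cs j)
            ∨ (∃ m, 1 ≤ m ∧ m ≤ n - 1 ∧ w = hookWord cs m)}) ∧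
    (∀ j ≤ n, ∀ k ≤ n, descendingWord cs j = descendingWord cs k → j = k) ∧
    (∀ m, 1 ≤ m → m ≤ n - 1 → ∀ m', 1 ≤ m' → m' ≤ n - 1 →
      hookWord cs m = hookWord cs m' → m = m') ∧
    (∀ j ≤ n, ∀ m, 1 ≤ m → m ≤ n - 1 → descendingWord cs j ≠ hookWord cs m) ∧
    (∀ j, 1 ≤ j → j ≤ n → ∀ i : Fin n,
      cs.IsLeftDescent (descendingWord cs j) i ↔ (i : ℕ) + 1 = j) ∧
    (∀ j, 1 ≤ j → j ≤ n - 1 → ∀ i : Fin n,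
      cs.IsLeftDescent (hookWord cs (n - j)) i ↔ (i : ℕ) + 1 = j) := by
  obtain rfl := TypeB.eq_coxeterMatrixB hM
  have hn₀ : 0 < n := by omega
  refine ⟨?_, fun j hj k hk h ↦ ?_, fun m _ hm m' _ hm' h ↦ ?_, fun j hj m _ hm h ↦ ?_,
    fun j _ hj i ↦ TypeB.isLeftDescent_descendingWord_iff cs hj i, fun j _ hj i ↦ ?_⟩
  · rw [← TypeB.range_cosetRep cs hn₀]
    exact (TypeB.isMinimalCosetSection_cosetRep cs hn₀).setOf_forall_not_isRightDescent
  · simpa only [TypeB.length_descendingWord cs hn₀, hj, hk] using congrArg cs.length h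
  · have hlen := congrArg cs.length h
    rw [TypeB.length_hookWord cs (by omega), TypeB.length_hookWord cs (by omega)] at hlen
    exact Nat.add_left_cancel hlen
  · have hlen := congrArg cs.length h
    rw [TypeB.length_descendingWord cs hn₀ hj, TypeB.length_hookWord cs (by omega)] at hlen
    omega
  · rw [TypeB.isLeftDescent_hookWord_iff cs (by omega)]
    omega
end

section
/- Let W be the Coxeter group of type Dₙ (n ≥ 4) with simple generators s₁, …, sₙ, Coxeter matrix m(i,i+1) = 3 for 1 ≤ i ≤ n−2, m(n−2,n) = 3, m(n−1,n) = 2, and m(i,j) = 2 for all other pairs i ≠ j, and length function ℓ. Then the set of elements w ∈ W having no right descent in {2, 3, …, n} is exactly the set of 2n elements {1, s₁, s₂s₁, …, sₙ₋₁sₙ₋₂⋯s₁, sₙsₙ₋₂sₙ₋₃⋯s₁, sₙsₙ₋₁sₙ₋₂⋯s₁, sₙ₋₂sₙsₙ₋₁sₙ₋₂⋯s₁, sₙ₋₃sₙ₋₂sₙsₙ₋₁sₙ₋₂⋯s₁, …, s₁s₂⋯sₙ₋₂sₙsₙ₋₁sₙ₋₂⋯s₁}, and these 2n elements are pairwise distinct.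 Moreover, the left descent sets are: {j} for sⱼsⱼ₋₁⋯s₁ with 1 ≤ j ≤ n−1; {n} for sₙsₙ₋₂sₙ₋₃⋯s₁; {n−1, n} for sₙsₙ₋₁sₙ₋₂⋯s₁; and {j} for sⱼsⱼ₊₁⋯sₙ₋₂sₙsₙ₋₁sₙ₋₂⋯s₁ with 1 ≤ j ≤ n−2. -/
/-- In type `Dₙ`: `dHookWord cs 0 = sₙsₙ₋₁sₙ₋₂⋯s₁` and
`dHookWord cs (m+1) = s_{n-2-m} * dHookWord cs m`, so that
`dHookWord cs (n-1-j) = sⱼsⱼ₊₁⋯sₙ₋₂sₙsₙ₋₁sₙ₋₂⋯s₁` for `1 ≤ j ≤ n-2`.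
Here the simple generator `sᵢ` (`1 ≤ i ≤ n`) is `cs.simple ⟨i - 1, _⟩`. -/
def dHookWord {n : ℕ} {W : Type*} [Group W] {M : CoxeterMatrix (Fin n)}
    (cs : CoxeterSystem M W) : ℕ → W
  | 0 => (if h : n - 1 < n then cs.simple ⟨n - 1, h⟩ else 1) * descendingWord cs (n - 1)
  | m + 1 => (if h : n - 3 - m < n then cs.simple ⟨n - 3 - m, h⟩ else 1) * dHookWord cs m

section

variable {B W : Type*} [Group W] {M : CoxeterMatrix B} (cs : CoxeterSystem M W)

theorem simple_mul_simple_comm_of_eq_two {i j : B} (h : M i j = 2) :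
    cs.simple i * cs.simple j = cs.simple j * cs.simple i := by
  have hbraid := cs.wordProd_braidWord_eq i j
  simpa [CoxeterSystem.wordProd, CoxeterSystem.braidWord, CoxeterSystem.alternatingWord,
    M.symmetric j i, h] using hbraid

theorem simple_mul_simple_mul_simple_of_eq_three {i j : B} (h : M i j = 3) :
    cs.simple i * cs.simple j * cs.simple i = cs.simple j * cs.simple i * cs.simple j := by
  have hbraid := cs.wordProd_braidWord_eq j i
  simpa [CoxeterSystem.wordProd, CoxeterSystem.braidWord, CoxeterSystem.alternatingWord,
    M.symmetric j i, h, mul_assoc] using hbraid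

theorem not_isRightDescent_simple_mul_of_isLeftDescent {w : W} {i j : B}
    (hi : cs.IsLeftDescent w i) (hj : ¬cs.IsRightDescent w j) :
    ¬cs.IsRightDescent (cs.simple i * w) j := by
  rw [cs.isLeftDescent_iff] at hi
  rw [cs.not_isRightDescent_iff] at hj
  have hmul := cs.length_simple_mul (w * cs.simple j) i
  rw [← mul_assoc] at hmul
  rw [CoxeterSystem.IsRightDescent]
  omega

end

section

variable {B W X : Type*} [Group W] [MulAction W X] {M : CoxeterMatrix B}
  {cs : CoxeterSystem M W} {x₀ : X} {height : X → ℕ} {rep : X → W}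

/-- The map `rep` is a section of the orbit map `w ↦ w • x₀` of a transitive `W`-set, built by
climbing a grading `height` of that set: a simple reflection either fixes a point or changes its
height by one, and `rep` picks up the letter `s i` whenever `s i` raises the height. -/
structure IsGradedSection (cs : CoxeterSystem M W) (x₀ : X) (height : X → ℕ) (rep : X → W) :
    Prop where
  height_base : height x₀ = 0
  height_simple_smul_le (i : B) (x : X) : height (cs.simple i • x) ≤ height x + 1
  simple_smul_eq_of_height_eq {i : B} {x : X} :
    height (cs.simple i • x) = height x → cs.simple i • x = x
  exists_height_simple_smul_lt {x : X} : x ≠ x₀ → ∃ i, height (cs.simple i • x) < height x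
  rep_base : rep x₀ = 1
  rep_simple_smul {i : B} {x : X} :
    height x < height (cs.simple i • x) → rep (cs.simple i • x) = cs.simple i * rep x

/-- The grading `height` behaves as on the weights of a minuscule representation of a simply laced
group. There `s i` raises the weight `x` exactly when `⟨x, αᵢ⟩ = 1`; if `s i` and `s j` both raise
`x` and `αᵢ`, `αⱼ` are not orthogonal, then `⟨s i • x, αⱼ⟩ = 2`, which minuscule weights exclude. -/
structure IsMinusculeGrading (cs : CoxeterSystem M W) (height : X → ℕ) : Prop where
  simplyLaced {i j : B} : i ≠ j → M i j = 2 ∨ M i j = 3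
  eq_two_of_lt_of_lt {i j : B} {x : X} : i ≠ j → height x < height (cs.simple i • x) →
    height x < height (cs.simple j • x) → M i j = 2

theorem simple_smul_simple_smul (cs : CoxeterSystem M W) (i : B) (x : X) :
    cs.simple i • cs.simple i • x = x := by
  rw [smul_smul, cs.simple_mul_simple_self, one_smul]

theorem simple_smul_fixes_of_eq_three (cs : CoxeterSystem M W) {i k : B} {x : X}
    (hik : M i k = 3) (hx : cs.simple i • x = x) :
    cs.simple k • cs.simple i • cs.simple k • x = cs.simple i • cs.simple k • x := by
  rw [← mul_smul, ← mul_smul, ← simple_mul_simple_mul_simple_of_eq_three cs hik, mul_smul,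
    mul_smul, hx]

namespace IsGradedSection

theorem height_wordProd_smul_le (h : IsGradedSection cs x₀ height rep) (ω : List B) (x : X) :
    height (cs.wordProd ω • x) ≤ height x + ω.length := by
  induction ω with
  | nil => simp
  | cons i ω ih =>
    have hstep := h.height_simple_smul_le i (cs.wordProd ω • x)
    rw [cs.wordProd_cons, mul_smul, List.length_cons]
    omega

theorem height_smul_le (h : IsGradedSection cs x₀ height rep) (w : W) (x : X) :
    height (w • x) ≤ height x + cs.length w := by
  obtain ⟨ω, hω, rfl⟩ := cs.exists_isReduced w
  rw [hω.eq]
  exact h.height_wordProd_smul_le ω x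

theorem height_smul_base_le (h : IsGradedSection cs x₀ height rep) (w : W) :
    height (w • x₀) ≤ cs.length w := by
  simpa only [h.height_base, zero_add] using h.height_smul_le w x₀

theorem induction_on (h : IsGradedSection cs x₀ height rep) {P : X → Prop} (x : X) (base : P x₀)
    (step : ∀ i y, height y < height (cs.simple i • y) → P y → P (cs.simple i • y)) : P x := by
  induction hx : height x using Nat.strong_induction_on generalizing x with
  | _ k ih =>
    obtain rfl | hne := eq_or_ne x x₀
    · exact base
    · obtain ⟨i, hi⟩ := h.exists_height_simple_smul_lt hne
      have hP := step i (cs.simple i • x) (by rwa [simple_smul_simple_smul])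
        (ih _ (hx ▸ hi) _ rfl)
      rwa [simple_smul_simple_smul] at hP

theorem rep_smul_base (h : IsGradedSection cs x₀ height rep) (x : X) : rep x • x₀ = x := by
  induction x using h.induction_on with
  | base => rw [h.rep_base, one_smul]
  | step i y hlt ih => rw [h.rep_simple_smul hlt, mul_smul, ih]

theorem rep_injective (h : IsGradedSection cs x₀ height rep) : Function.Injective rep :=
  Function.LeftInverse.injective (g := (· • x₀)) h.rep_smul_base

theorem length_rep_le (h : IsGradedSection cs x₀ height rep) (x : X) :
    cs.length (rep x) ≤ height x := by
  induction x using h.induction_on with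
  | base => rw [h.rep_base, cs.length_one]; exact Nat.zero_le _
  | step i y hlt ih =>
    have hmul := cs.length_mul_le (cs.simple i) (rep y)
    rw [cs.length_simple] at hmul
    rw [h.rep_simple_smul hlt]
    omega

theorem length_rep (h : IsGradedSection cs x₀ height rep) (x : X) :
    cs.length (rep x) = height x := by
  refine (h.length_rep_le x).antisymm ?_
  simpa only [h.rep_smul_base] using h.height_smul_base_le (rep x)

theorem simple_mul_rep (h : IsGradedSection cs x₀ height rep) {i : B} {x : X}
    (hx : cs.simple i • x ≠ x) : cs.simple i * rep x = rep (cs.simple i • x) := by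
  obtain hlt | heq | hgt := lt_trichotomy (height x) (height (cs.simple i • x))
  · exact (h.rep_simple_smul hlt).symm
  · exact absurd (h.simple_smul_eq_of_height_eq heq.symm) hx
  · have hrep := h.rep_simple_smul (i := i) (x := cs.simple i • x)
      (by rwa [simple_smul_simple_smul])
    rw [simple_smul_simple_smul] at hrep
    rw [hrep, cs.simple_mul_simple_cancel_left]

theorem not_isRightDescent_rep (h : IsGradedSection cs x₀ height rep) {j : B}
    (hj : cs.simple j • x₀ = x₀) (x : X) : ¬cs.IsRightDescent (rep x) j := by
  have hle := h.height_smul_base_le (rep x * cs.simple j)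
  rw [mul_smul, hj, h.rep_smul_base, ← h.length_rep] at hle
  exact hle.not_gt

theorem isLeftDescent_rep_iff (h : IsGradedSection cs x₀ height rep) {i : B} {x : X} :
    cs.IsLeftDescent (rep x) i ↔ height (cs.simple i • x) < height x := by
  rw [CoxeterSystem.IsLeftDescent]
  by_cases hx : cs.simple i • x = x
  · have hle := h.height_smul_base_le (cs.simple i * rep x)
    rw [mul_smul, h.rep_smul_base, hx, ← h.length_rep] at hle
    simpa only [hx, lt_irrefl, iff_false, not_lt] using hle
  · rw [h.simple_mul_rep hx, h.length_rep, h.length_rep]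

theorem height_simple_smul_simple_smul_lt (h : IsGradedSection cs x₀ height rep)
    (hmin : IsMinusculeGrading cs height) {i k : B} {x : X} (hik : M i k = 3)
    (hi : cs.simple i • x = x) (hk : height (cs.simple k • x) < height x) :
    height (cs.simple i • cs.simple k • x) < height (cs.simple k • x) := by
  obtain hlt | heq | hgt :=
    lt_trichotomy (height (cs.simple i • cs.simple k • x)) (height (cs.simple k • x))
  · exact hlt
  · have hfix := h.simple_smul_eq_of_height_eq heq
    have hx := simple_smul_fixes_of_eq_three cs hik hi
    rw [hfix, simple_smul_simple_smul] at hx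
    exact absurd hk (hx ▸ lt_irrefl _)
  · have hne : i ≠ k := by
      rintro rfl
      exact hk.ne (congrArg height hi)
    have htwo := hmin.eq_two_of_lt_of_lt hne hgt (by rwa [simple_smul_simple_smul])
    omega

theorem exists_simple_mul_rep_eq (h : IsGradedSection cs x₀ height rep)
    (hmin : IsMinusculeGrading cs height) {i : B} {x : X} (hx : cs.simple i • x = x) :
    ∃ j, cs.simple j • x₀ = x₀ ∧ cs.simple i * rep x = rep x * cs.simple j := by
  induction hheight : height x using Nat.strong_induction_on generalizing x i with
  | _ n ih =>
  subst hheight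
  obtain rfl | hne := eq_or_ne x x₀
  · exact ⟨i, hx, by rw [h.rep_base, mul_one, one_mul]⟩
  obtain ⟨k, hk⟩ := h.exists_height_simple_smul_lt hne
  have rep_eq {l : B} {y : X} (hlt : height (cs.simple l • y) < height y) :
      rep y = cs.simple l * rep (cs.simple l • y) := by
    rw [← h.simple_mul_rep (ne_of_apply_ne height hlt.ne), cs.simple_mul_simple_cancel_left]
  have hik : i ≠ k := by
    rintro rfl
    exact hk.ne (congrArg height hx)
  obtain htwo | hthree := hmin.simplyLaced hik
  · have hcomm := simple_mul_simple_comm_of_eq_two cs htwo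
    have hfix : cs.simple i • cs.simple k • x = cs.simple k • x := by
      rw [← mul_smul, hcomm, mul_smul, hx]
    obtain ⟨j, hj, hrep⟩ := ih _ hk hfix rfl
    refine ⟨j, hj, ?_⟩
    rw [rep_eq hk, ← mul_assoc, hcomm, mul_assoc, hrep, mul_assoc]
  · -- Here `rep x = sₖ * sᵢ * r`, and by the braid relation `sₖ` fixes the weight of `r`.
    have hlt := h.height_simple_smul_simple_smul_lt hmin hthree hx hk
    obtain ⟨j, hj, hrep⟩ :=
      ih _ (hlt.trans hk) (simple_smul_fixes_of_eq_three cs hthree hx) rfl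
    refine ⟨j, hj, ?_⟩
    set r := rep (cs.simple i • cs.simple k • x)
    calc cs.simple i * rep x = cs.simple i * cs.simple k * cs.simple i * r := by
          rw [rep_eq hk, rep_eq hlt, mul_assoc, mul_assoc]
      _ = cs.simple k * cs.simple i * (cs.simple k * r) := by
          rw [simple_mul_simple_mul_simple_of_eq_three cs hthree, mul_assoc]
      _ = rep x * cs.simple j := by rw [hrep, rep_eq hk, rep_eq hlt]; simp only [mul_assoc, r]

theorem exists_rep_eq (h : IsGradedSection cs x₀ height rep)
    (hmin : IsMinusculeGrading cs height) {w : W}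
    (hw : ∀ j, cs.simple j • x₀ = x₀ → ¬cs.IsRightDescent w j) : ∃ x, rep x = w := by
  induction hk : cs.length w using Nat.strong_induction_on generalizing w with
  | _ k ih =>
    obtain rfl | hne := eq_or_ne w 1
    · exact ⟨x₀, h.rep_base⟩
    obtain ⟨i, hi⟩ := cs.exists_leftDescent_of_ne_one hne
    obtain ⟨x, hx⟩ := ih _ (hk ▸ hi) (w := cs.simple i * w)
      (fun j hj ↦ not_isRightDescent_simple_mul_of_isLeftDescent cs hi (hw j hj)) rfl
    have hw_eq : w = cs.simple i * rep x := by rw [hx, cs.simple_mul_simple_cancel_left]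
    by_cases hfix : cs.simple i • x = x
    · obtain ⟨j, hj, hcomm⟩ := h.exists_simple_mul_rep_eq hmin hfix
      have hwj : w * cs.simple j = cs.simple i * w := by
        rw [hw_eq, hcomm, cs.simple_mul_simple_cancel_right, ← hcomm,
          cs.simple_mul_simple_cancel_left]
      refine absurd ?_ (hw j hj)
      rwa [CoxeterSystem.IsRightDescent, hwj]
    · exact ⟨cs.simple i • x, by rw [hw_eq, h.simple_mul_rep hfix]⟩

theorem setOf_not_isRightDescent_eq_range (h : IsGradedSection cs x₀ height rep)
    (hmin : IsMinusculeGrading cs height) :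
    {w : W | ∀ j, cs.simple j • x₀ = x₀ → ¬cs.IsRightDescent w j} = Set.range rep := by
  refine Set.Subset.antisymm (fun w hw ↦ h.exists_rep_eq hmin hw) ?_
  rintro _ ⟨x, rfl⟩ j hj
  exact h.not_isRightDescent_rep hj x

end IsGradedSection

end

/-- The simple reflection with index `i` (counted from `0`) of type `Dₙ` acting on the weights of
the vector representation, encoded as positions in their weight order: `p < n` stands for the
coordinate vector `eₚ` (counted from `0`) and `2 * n - 1 - p` for its negative. -/
def typeDStep (n i p : ℕ) : ℕ :=
  if i + 1 = n then
    if p + 2 = n ∨ p + 1 = n then p + 2 else if p = n ∨ p = n + 1 then p - 2 else p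
  else
    if p = i ∨ p + i + 2 = 2 * n then p + 1 else if p = i + 1 ∨ p + i + 1 = 2 * n then p - 1 else p

/-- Adjacency of nodes in the Dynkin diagram of type `Dₙ`, with nodes numbered from `0`. -/
def TypeDAdj (n i j : ℕ) : Prop :=
  ((i + 1 = j ∨ j + 1 = i) ∧ i + 1 ≠ n ∧ j + 1 ≠ n) ∨
    ((i = n - 3 ∧ j = n - 1) ∨ (j = n - 3 ∧ i = n - 1))

instance (n i j : ℕ) : Decidable (TypeDAdj n i j) :=
  inferInstanceAs (Decidable (_ ∨ _))

/-- The length of a shortest path from position `0` to position `p`. The positions `n - 1` and `n`,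
standing for `eₙ₋₁` and its negative, are incomparable and share a level. -/
def typeDHeight (n p : ℕ) : ℕ := if p < n then p else p - 1

section

variable {n i j : ℕ}

theorem typeDStep_lt (hn : 3 ≤ n) (hi : i < n) {p : ℕ} (hp : p < 2 * n) :
    typeDStep n i p < 2 * n := by
  grind [typeDStep]

theorem typeDStep_typeDStep (hn : 3 ≤ n) (p : ℕ) :
    typeDStep n i (typeDStep n i p) = p := by
  grind [typeDStep]

theorem typeDStep_comm_of_not_adj (hi : i < n) (hj : j < n) (h : ¬TypeDAdj n i j)
    (p : ℕ) :
    typeDStep n i (typeDStep n j p) = typeDStep n j (typeDStep n i p) := by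
  grind (splits := 30) [typeDStep, TypeDAdj]

theorem typeDStep_braid_of_adj (hn : 3 ≤ n) (hi : i < n) (hj : j < n) (h : TypeDAdj n i j)
    (p : ℕ) :
    typeDStep n i (typeDStep n j (typeDStep n i p)) =
      typeDStep n j (typeDStep n i (typeDStep n j p)) := by
  grind (splits := 30) [typeDStep, TypeDAdj]

theorem lt_typeDStep_iff (hi : i < n) {p : ℕ} :
    p < typeDStep n i p ↔
      (i + 1 < n ∧ (p = i ∨ p + i + 2 = 2 * n)) ∨ (i + 1 = n ∧ (p + 2 = n ∨ p + 1 = n)) := by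
  grind [typeDStep]

theorem typeDStep_lt_iff (hi : i < n) {p : ℕ} :
    typeDStep n i p < p ↔
      (i + 1 < n ∧ (p = i + 1 ∨ p + i + 1 = 2 * n)) ∨ (i + 1 = n ∧ (p = n ∨ p = n + 1)) := by
  grind [typeDStep]

theorem typeDStep_zero_eq_zero_iff (hn : 3 ≤ n) (hi : i < n) : typeDStep n i 0 = 0 ↔ i ≠ 0 := by
  grind [typeDStep]

theorem exists_typeDStep_lt {p : ℕ} (hp : p < 2 * n) (h0 : p ≠ 0) :
    ∃ i < n, typeDStep n i p < p := by
  obtain h | h : p < n ∨ n ≤ p := by omega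
  · exact ⟨p - 1, by omega, by grind [typeDStep]⟩
  · exact ⟨if p ≤ n + 1 then n - 1 else 2 * n - 1 - p, by grind, by grind [typeDStep]⟩

theorem typeDHeight_typeDStep_le (p : ℕ) :
    typeDHeight n (typeDStep n i p) ≤ typeDHeight n p + 1 := by
  grind [typeDStep, typeDHeight]

theorem typeDHeight_lt_typeDHeight_typeDStep_iff (hi : i < n) {p : ℕ} :
    typeDHeight n p < typeDHeight n (typeDStep n i p) ↔ p < typeDStep n i p := by
  grind [typeDStep, typeDHeight]

theorem typeDHeight_typeDStep_lt_typeDHeight_iff (hn : 3 ≤ n) {p : ℕ} :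
    typeDHeight n (typeDStep n i p) < typeDHeight n p ↔ typeDStep n i p < p := by
  grind [typeDStep, typeDHeight]

theorem not_typeDAdj_of_lt_typeDStep (hn : 3 ≤ n) (hi : i < n) (hj : j < n) {p : ℕ}
    (hpi : p < typeDStep n i p) (hpj : p < typeDStep n j p) : ¬TypeDAdj n i j := by
  rw [lt_typeDStep_iff hi] at hpi
  rw [lt_typeDStep_iff hj] at hpj
  unfold TypeDAdj
  omega

end

theorem mul_pow_three_eq_one_of_braid {G : Type*} [Monoid G] {a b : G} (ha : a * a = 1)
    (hb : b * b = 1) (h : a * b * a = b * a * b) : (a * b) ^ 3 = 1 :=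
  calc (a * b) ^ 3 = a * b * a * (b * a * b) := by
        simp only [pow_succ, pow_zero, one_mul, mul_assoc]
    _ = a * b * (a * a) * (b * a) := by rw [← h]; simp only [mul_assoc]
    _ = a * (b * b) * a := by rw [ha]; simp only [mul_one, mul_assoc]
    _ = 1 := by rw [hb, mul_one, ha]

section

variable {n : ℕ} {W : Type*} [Group W] {M : CoxeterMatrix (Fin n)}

/-- `M` is the Coxeter matrix of type `Dₙ`, with nodes numbered from `0`. -/
def IsTypeD (M : CoxeterMatrix (Fin n)) : Prop :=
  ∀ i j : Fin n, i ≠ j → M i j = if TypeDAdj n i j then 3 else 2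

/-- The permutation `typeDStep n i` of the `2 * n` positions. -/
def typeDPerm (hn : 3 ≤ n) (i : Fin n) : Equiv.Perm (Fin (2 * n)) :=
  Function.Involutive.toPerm (fun p ↦ ⟨typeDStep n i p, typeDStep_lt hn i.2 p.2⟩)
    fun p ↦ Fin.ext (typeDStep_typeDStep hn p)

theorem typeDPerm_mul_self (hn : 3 ≤ n) (i : Fin n) : typeDPerm hn i * typeDPerm hn i = 1 :=
  Equiv.ext fun p ↦ Fin.ext (typeDStep_typeDStep hn p)

theorem isLiftable_typeDPerm (hn : 3 ≤ n) (hM : IsTypeD M) : M.IsLiftable (typeDPerm hn) := by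
  intro i j
  have hi := typeDPerm_mul_self hn i
  have hj := typeDPerm_mul_self hn j
  obtain rfl | hij := eq_or_ne i j
  · rw [M.diagonal, pow_one, hi]
  rw [hM i j hij]
  split_ifs with hadj
  · exact mul_pow_three_eq_one_of_braid hi hj <|
      Equiv.ext fun p ↦ Fin.ext (typeDStep_braid_of_adj hn i.2 j.2 hadj p)
  · have hcomm : Commute (typeDPerm hn i) (typeDPerm hn j) :=
      Equiv.ext fun p ↦ Fin.ext (typeDStep_comm_of_not_adj i.2 j.2 hadj p)
    rw [hcomm.mul_pow, pow_two, pow_two, hi, hj, one_mul]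

/-- The action of the Coxeter group of type `Dₙ` on the weights of the vector representation. -/
abbrev typeDAction (hn : 3 ≤ n) (hM : IsTypeD M) (cs : CoxeterSystem M W) :
    MulAction W (Fin (2 * n)) :=
  MulAction.compHom _ (cs.lift ⟨_, isLiftable_typeDPerm hn hM⟩)

theorem val_simple_smul_typeDAction (hn : 3 ≤ n) (hM : IsTypeD M) (cs : CoxeterSystem M W)
    (i : Fin n) (p : Fin (2 * n)) :
    letI := typeDAction hn hM cs
    ((cs.simple i • p : Fin (2 * n)) : ℕ) = typeDStep n i p :=
  congrArg Fin.val (Equiv.congr_fun (cs.lift_apply_simple (isLiftable_typeDPerm hn hM) i) p)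

theorem isMinusculeGrading_typeDHeight (hn : 3 ≤ n) (hM : IsTypeD M) (cs : CoxeterSystem M W) :
    letI := typeDAction hn hM cs
    IsMinusculeGrading cs fun p : Fin (2 * n) ↦ typeDHeight n p := by
  let := typeDAction hn hM cs
  refine ⟨fun {i j} hij ↦ ?_, fun {i j p} hij hi hj ↦ ?_⟩
  · rw [hM i j hij]
    split_ifs
    exacts [.inr rfl, .inl rfl]
  · rw [val_simple_smul_typeDAction, typeDHeight_lt_typeDHeight_typeDStep_iff (Fin.is_lt _)]
      at hi hj
    rw [hM i j hij, if_neg (not_typeDAdj_of_lt_typeDStep hn i.2 j.2 hi hj)]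

theorem descendingWord_succ (cs : CoxeterSystem M W) {j : ℕ} (hj : j < n) :
    descendingWord cs (j + 1) = cs.simple ⟨j, hj⟩ * descendingWord cs j := by
  rw [descendingWord, dif_pos hj]

theorem dHookWord_zero (cs : CoxeterSystem M W) (h : n - 1 < n) :
    dHookWord cs 0 = cs.simple ⟨n - 1, h⟩ * descendingWord cs (n - 1) := by
  rw [dHookWord, dif_pos h]

theorem dHookWord_succ (cs : CoxeterSystem M W) {m : ℕ} (h : n - 3 - m < n) :
    dHookWord cs (m + 1) = cs.simple ⟨n - 3 - m, h⟩ * dHookWord cs m := by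
  rw [dHookWord, dif_pos h]

/-- The candidate coset representative taking position `0` to position `p`: the words of the
theorem, listed in the order of the positions they reach. -/
def typeDRep (cs : CoxeterSystem M W) (p : Fin (2 * n)) : W :=
  if (p : ℕ) < n then descendingWord cs p
  else if (p : ℕ) = n then cs.simple ⟨n - 1, by have := p.2; omega⟩ * descendingWord cs (n - 2)
  else dHookWord cs (p - n - 1)

theorem descendingWord_eq_typeDRep (cs : CoxeterSystem M W) {j : ℕ} (hj : j < n) :
    descendingWord cs j = typeDRep cs ⟨j, by omega⟩ := by
  rw [typeDRep, if_pos hj]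

theorem simple_mul_descendingWord_eq_typeDRep (cs : CoxeterSystem M W) (h : n - 1 < n) :
    cs.simple ⟨n - 1, h⟩ * descendingWord cs (n - 2) = typeDRep cs ⟨n, by omega⟩ := by
  rw [typeDRep, if_neg (lt_irrefl n), if_pos rfl]

theorem dHookWord_eq_typeDRep (cs : CoxeterSystem M W) {m : ℕ} (hm : n + 1 + m < 2 * n) :
    dHookWord cs m = typeDRep cs ⟨n + 1 + m, hm⟩ := by
  rw [typeDRep, if_neg (by dsimp only; omega), if_neg (by dsimp only; omega)]
  congr 1
  dsimp only
  omega

theorem dHookWord_zero_eq_simple_mul (hn : 3 ≤ n) (hM : IsTypeD M) (cs : CoxeterSystem M W) :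
    dHookWord cs 0 = cs.simple ⟨n - 2, by omega⟩ *
      (cs.simple ⟨n - 1, by omega⟩ * descendingWord cs (n - 2)) := by
  have hcomm := simple_mul_simple_comm_of_eq_two cs
    (i := ⟨n - 1, by omega⟩) (j := ⟨n - 2, by omega⟩)
    (by rw [hM _ _ (Fin.ne_of_val_ne (by dsimp only; omega)),
      if_neg (by unfold TypeDAdj; dsimp only; omega)])
  have hdesc := descendingWord_succ cs (j := n - 2) (by omega)
  rw [show n - 2 + 1 = n - 1 by omega] at hdesc
  rw [dHookWord_zero cs (by omega), hdesc, ← mul_assoc, hcomm, mul_assoc]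

theorem typeDRep_eq_simple_mul_typeDRep (hn : 3 ≤ n) (hM : IsTypeD M) (cs : CoxeterSystem M W)
    {i : Fin n} {p q : Fin (2 * n)} (hq : (q : ℕ) = typeDStep n i p) (hlt : p < q) :
    typeDRep cs q = cs.simple i * typeDRep cs p := by
  obtain ⟨i, hi⟩ := i
  obtain ⟨p, hp⟩ := p
  obtain ⟨q, hq'⟩ := q
  dsimp only at hq
  have hup : p < typeDStep n i p := hq ▸ hlt
  rw [lt_typeDStep_iff hi] at hup
  have hq_eq : q = if i + 1 < n then p + 1 else p + 2 := by grind [typeDStep]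
  clear hq hlt
  obtain ⟨hin, rfl | hpi⟩ | ⟨hin, hpn | hpn⟩ := hup
  · obtain rfl : q = p + 1 := by rw [hq_eq, if_pos hin]
    rw [← descendingWord_eq_typeDRep cs hin, ← descendingWord_eq_typeDRep cs hi,
      descendingWord_succ cs hi]
  · obtain rfl : q = p + 1 := by rw [hq_eq, if_pos hin]
    obtain rfl | hnp : p = n ∨ n < p := by omega
    · obtain rfl : i = p - 2 := by omega
      rw [← dHookWord_eq_typeDRep cs (m := 0),
        ← simple_mul_descendingWord_eq_typeDRep cs (by omega), dHookWord_zero_eq_simple_mul hn hM]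
    · obtain ⟨m, rfl⟩ : ∃ m, p = n + 1 + m := Nat.exists_eq_add_of_le hnp
      obtain rfl : i = n - 3 - m := by omega
      rw [← dHookWord_eq_typeDRep cs hp, ← dHookWord_succ]
      exact (dHookWord_eq_typeDRep cs (m := m + 1) hq').symm
  · obtain rfl : q = n := by rw [hq_eq, if_neg (by omega), hpn]
    obtain rfl : i = q - 1 := by omega
    obtain rfl : p = q - 2 := by omega
    rw [← simple_mul_descendingWord_eq_typeDRep cs hi, ← descendingWord_eq_typeDRep cs (by omega)]
  · obtain rfl : q = n + 1 := by rw [hq_eq, if_neg (by omega)]; omega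
    obtain rfl : i = n - 1 := by omega
    obtain rfl : p = n - 1 := by omega
    rw [← dHookWord_eq_typeDRep cs (m := 0), ← descendingWord_eq_typeDRep cs hi, dHookWord_zero]

/-- The position of the highest weight `e₀`. -/
abbrev typeDBase (hn : 3 ≤ n) : Fin (2 * n) := ⟨0, by omega⟩

theorem isGradedSection_typeDRep (hn : 3 ≤ n) (hM : IsTypeD M) (cs : CoxeterSystem M W) :
    letI := typeDAction hn hM cs
    IsGradedSection cs (typeDBase hn) (fun p : Fin (2 * n) ↦ typeDHeight n p) (typeDRep cs) := by
  let := typeDAction hn hM cs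
  have hval := val_simple_smul_typeDAction hn hM cs
  have hlt_iff (i : Fin n) (p : Fin (2 * n)) :=
    typeDHeight_lt_typeDHeight_typeDStep_iff i.2 (p := p)
  have hgt_iff (i : Fin n) (p : Fin (2 * n)) :=
    typeDHeight_typeDStep_lt_typeDHeight_iff hn (i := i) (p := p)
  refine ⟨?_, fun i p ↦ ?_, fun {i p} heq ↦ ?_, fun {p} hp ↦ ?_, ?_, fun {i p} hlt ↦ ?_⟩
  · exact if_pos (by dsimp only; omega)
  · rw [hval]
    exact typeDHeight_typeDStep_le p
  · rw [hval] at heq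
    refine Fin.ext ((hval i p).trans (le_antisymm ?_ ?_))
    · exact not_lt.1 fun hlt ↦ heq.not_gt ((hlt_iff i p).2 hlt)
    · exact not_lt.1 fun hgt ↦ heq.not_lt ((hgt_iff i p).2 hgt)
  · obtain ⟨i, hi, hlt⟩ := exists_typeDStep_lt p.2 (Fin.val_ne_of_ne hp)
    refine ⟨⟨i, hi⟩, ?_⟩
    rw [hval]
    exact (hgt_iff ⟨i, hi⟩ p).2 hlt
  · rw [← descendingWord_eq_typeDRep cs (by omega), descendingWord]
  · rw [hval, hlt_iff] at hlt
    exact typeDRep_eq_simple_mul_typeDRep hn hM cs (hval i p) (by rwa [Fin.lt_def, hval])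

theorem typeDRep_injective (hn : 3 ≤ n) (hM : IsTypeD M) (cs : CoxeterSystem M W) :
    Function.Injective (typeDRep cs) :=
  letI := typeDAction hn hM cs
  (isGradedSection_typeDRep hn hM cs).rep_injective

theorem isLeftDescent_typeDRep_iff (hn : 3 ≤ n) (hM : IsTypeD M) (cs : CoxeterSystem M W)
    {i : Fin n} {p : Fin (2 * n)} :
    cs.IsLeftDescent (typeDRep cs p) i ↔
      ((i : ℕ) + 1 < n ∧ ((p : ℕ) = i + 1 ∨ (p : ℕ) + i + 1 = 2 * n)) ∨
        ((i : ℕ) + 1 = n ∧ ((p : ℕ) = n ∨ (p : ℕ) = n + 1)) := by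
  let := typeDAction hn hM cs
  rw [(isGradedSection_typeDRep hn hM cs).isLeftDescent_rep_iff, val_simple_smul_typeDAction,
    typeDHeight_typeDStep_lt_typeDHeight_iff hn, typeDStep_lt_iff i.2]

theorem setOf_not_isRightDescent_eq_range_typeDRep (hn : 3 ≤ n) (hM : IsTypeD M)
    (cs : CoxeterSystem M W) :
    {w : W | ∀ i : Fin n, (i : ℕ) ≠ 0 → ¬cs.IsRightDescent w i} = Set.range (typeDRep cs) := by
  let := typeDAction hn hM cs
  rw [← (isGradedSection_typeDRep hn hM cs).setOf_not_isRightDescent_eq_range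
    (isMinusculeGrading_typeDHeight hn hM cs)]
  simp only [Fin.ext_iff, val_simple_smul_typeDAction, typeDStep_zero_eq_zero_iff hn (Fin.is_lt _)]

theorem range_typeDRep (hn : 2 ≤ n) (cs : CoxeterSystem M W) :
    Set.range (typeDRep cs) = {w : W | (∃ j ≤ n - 1, w = descendingWord cs j) ∨
      w = cs.simple ⟨n - 1, by omega⟩ * descendingWord cs (n - 2) ∨
      ∃ m ≤ n - 2, w = dHookWord cs m} := by
  refine Set.Subset.antisymm ?_ ?_
  · rintro _ ⟨⟨p, hp⟩, rfl⟩
    obtain hlt | rfl | hgt := lt_trichotomy p n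
    · exact .inl ⟨p, by omega, (descendingWord_eq_typeDRep cs hlt).symm⟩
    · exact .inr (.inl (simple_mul_descendingWord_eq_typeDRep cs (by omega)).symm)
    · obtain ⟨m, rfl⟩ : ∃ m, p = n + 1 + m := Nat.exists_eq_add_of_le hgt
      exact .inr (.inr ⟨m, by omega, (dHookWord_eq_typeDRep cs hp).symm⟩)
  · rintro _ (⟨j, hj, rfl⟩ | rfl | ⟨m, hm, rfl⟩)
    · exact ⟨_, (descendingWord_eq_typeDRep cs (by omega)).symm⟩
    · exact ⟨_, (simple_mul_descendingWord_eq_typeDRep cs (by omega)).symm⟩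
    · exact ⟨_, (dHookWord_eq_typeDRep cs (by omega)).symm⟩

end

/-- The `{2,…,n}`-positive elements of the Coxeter group of type `Dₙ` (`n ≥ 4`):
the set of `w` with no right descent in `{2,…,n}` is exactly the `2n` pairwise
distinct elements `{1, s₁, s₂s₁, …, sₙ₋₁⋯s₁, sₙsₙ₋₂sₙ₋₃⋯s₁, sₙsₙ₋₁sₙ₋₂⋯s₁,
sₙ₋₂sₙsₙ₋₁sₙ₋₂⋯s₁, …, s₁s₂⋯sₙ₋₂sₙsₙ₋₁sₙ₋₂⋯s₁}`, with the indicated left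
descent sets.  Here the simple generator `sᵢ` (`1 ≤ i ≤ n`) is
`cs.simple ⟨i - 1, _⟩`. -/
theorem typeD_positive_weyl_group
    (n : ℕ) (hn : 4 ≤ n) {W : Type*} [Group W]
    (M : CoxeterMatrix (Fin n))
    (hM : ∀ i j : Fin n, i ≠ j →
      M i j = if (((i : ℕ) + 1 = (j : ℕ) ∨ (j : ℕ) + 1 = (i : ℕ))
            ∧ (i : ℕ) + 1 ≠ n ∧ (j : ℕ) + 1 ≠ n)
          ∨ (((i : ℕ) = n - 3 ∧ (j : ℕ) = n - 1) ∨ ((j : ℕ) = n - 3 ∧ (i : ℕ) = n - 1))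
        then 3 else 2)
    (cs : CoxeterSystem M W) :
    ({w : W | ∀ i : Fin n, (i : ℕ) ≠ 0 → ¬ cs.IsRightDescent w i}
        = {w : W | (∃ j ≤ n - 1, w = descendingWord cs j)
            ∨ w = cs.simple ⟨n - 1, by omega⟩ * descendingWord cs (n - 2)
            ∨ (∃ m ≤ n - 2, w = dHookWord cs m)}) ∧
    (∀ j ≤ n - 1, ∀ k ≤ n - 1, descendingWord cs j = descendingWord cs k → j = k) ∧
    (∀ m ≤ n - 2, ∀ m' ≤ n - 2, dHookWord cs m = dHookWord cs m' → m = m') ∧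
    (∀ j ≤ n - 1,
      descendingWord cs j ≠ cs.simple ⟨n - 1, by omega⟩ * descendingWord cs (n - 2)) ∧
    (∀ m ≤ n - 2,
      dHookWord cs m ≠ cs.simple ⟨n - 1, by omega⟩ * descendingWord cs (n - 2)) ∧
    (∀ j ≤ n - 1, ∀ m ≤ n - 2, descendingWord cs j ≠ dHookWord cs m) ∧
    (∀ j, 1 ≤ j → j ≤ n - 1 → ∀ i : Fin n,
      cs.IsLeftDescent (descendingWord cs j) i ↔ (i : ℕ) + 1 = j) ∧
    (∀ i : Fin n,
      cs.IsLeftDescent (cs.simple ⟨n - 1, by omega⟩ * descendingWord cs (n - 2)) i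
        ↔ (i : ℕ) + 1 = n) ∧
    (∀ i : Fin n,
      cs.IsLeftDescent (dHookWord cs 0) i ↔ ((i : ℕ) + 1 = n - 1 ∨ (i : ℕ) + 1 = n)) ∧
    (∀ j, 1 ≤ j → j ≤ n - 2 → ∀ i : Fin n,
      cs.IsLeftDescent (dHookWord cs (n - 1 - j)) i ↔ (i : ℕ) + 1 = j) := by
  have hn' : 3 ≤ n := by omega
  have hD : IsTypeD M := hM
  have hinj {p q : Fin (2 * n)} : typeDRep cs p = typeDRep cs q ↔ (p : ℕ) = q :=
    (typeDRep_injective hn' hD cs).eq_iff.trans Fin.ext_iff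
  have hdesc {j : ℕ} (hj : j ≤ n - 1) := descendingWord_eq_typeDRep cs (show j < n by omega)
  have hlast := simple_mul_descendingWord_eq_typeDRep cs (show n - 1 < n by omega)
  have hhook {m : ℕ} (hm : m ≤ n - 2) :=
    dHookWord_eq_typeDRep cs (show n + 1 + m < 2 * n by omega)
  refine ⟨?_, fun j hj k hk ↦ ?_, fun m hm m' hm' ↦ ?_, fun j hj ↦ ?_, fun m hm ↦ ?_,
    fun j hj m hm ↦ ?_, fun j _ hj i ↦ ?_, fun i ↦ ?_, fun i ↦ ?_, fun j hj1 hj i ↦ ?_⟩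
  · rw [setOf_not_isRightDescent_eq_range_typeDRep hn' hD, range_typeDRep (by omega)]
  · rw [hdesc hj, hdesc hk, hinj]; exact id
  · rw [hhook hm, hhook hm', hinj]; exact Nat.add_left_cancel
  · rw [hdesc hj, hlast, Ne, hinj]; dsimp only; omega
  · rw [hhook hm, hlast, Ne, hinj]; dsimp only; omega
  · rw [hdesc hj, hhook hm, Ne, hinj]; dsimp only; omega
  · rw [hdesc hj, isLeftDescent_typeDRep_iff hn' hD]; dsimp only; omega
  · rw [hlast, isLeftDescent_typeDRep_iff hn' hD]; dsimp only; omega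
  · rw [hhook (Nat.zero_le _), isLeftDescent_typeDRep_iff hn' hD]; dsimp only; omega
  · rw [hhook (show n - 1 - j ≤ n - 2 by omega), isLeftDescent_typeDRep_iff hn' hD]
    dsimp only; omega
end

section
/- Let W be the Coxeter group of type F₄ with simple generators s₁, s₂, s₃, s₄, Coxeter matrix m(1,2) = 3, m(2,3) = 4, m(3,4) = 3, and m(i,j) = 2 for the remaining pairs i ≠ j, and length function ℓ. Write a word i₁i₂⋯iₘ for the product s_{i₁}s_{i₂}⋯s_{iₘ}. Then the set of elements w ∈ W having no right descent in {2, 3, 4} is exactly the 24 pairwise distinct elements given by the words: (empty word), 1, 21, 321, 4321, 2321, 24321, 12321, 324321, 124321, 2324321, 1324321, 12324321, 21324321, 212324321, 321324321, 3212324321, 4321324321, 23212324321, 14321324321, 423212324321, 3423212324321, 23423212324321, 123423212324321; and each of these words is reduced (its length equals its number of letters). -/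
/-- The list of the 24 words (in the simple generators, `0`-indexed: the
generator `sᵢ` of the paper is index `i - 1`) for the `⟨Sp(3)⟩`-positive Weyl
group of `F₄`: the words
`ε, 1, 21, 321, 4321, 2321, 24321, 12321, 324321, 124321, 2324321, 1324321,
12324321, 21324321, 212324321, 321324321, 3212324321, 4321324321, 23212324321,
14321324321, 423212324321, 3423212324321, 23423212324321, 123423212324321`. -/
def F4PositiveWords : List (List (Fin 4)) :=
  [[], [0], [1, 0],
  [2, 1, 0], [3, 2, 1, 0], [1, 2, 1, 0],
  [1, 3, 2, 1, 0], [0, 1, 2, 1, 0], [2, 1, 3, 2, 1, 0],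
  [0, 1, 3, 2, 1, 0], [1, 2, 1, 3, 2, 1, 0], [0, 2, 1, 3, 2, 1, 0],
  [0, 1, 2, 1, 3, 2, 1, 0], [1, 0, 2, 1, 3, 2, 1, 0], [1, 0, 1, 2, 1, 3, 2, 1, 0],
  [2, 1, 0, 2, 1, 3, 2, 1, 0], [2, 1, 0, 1, 2, 1, 3, 2, 1, 0],
  [3, 2, 1, 0, 2, 1, 3, 2, 1, 0], [1, 2, 1, 0, 1, 2, 1, 3, 2, 1, 0],
  [0, 3, 2, 1, 0, 2, 1, 3, 2, 1, 0], [3, 1, 2, 1, 0, 1, 2, 1, 3, 2, 1, 0],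
  [2, 3, 1, 2, 1, 0, 1, 2, 1, 3, 2, 1, 0],
  [1, 2, 3, 1, 2, 1, 0, 1, 2, 1, 3, 2, 1, 0],
  [0, 1, 2, 3, 1, 2, 1, 0, 1, 2, 1, 3, 2, 1, 0]]

/-!
Let `W` act on the weight lattice, and let `v` be a dominant weight fixed by exactly those simple
reflections `sⱼ` with `j ∈ E`; in the theorem `v` is the fundamental weight dual to `α₁^∨`.  Tits'
lemma says that `⟨w v, αᵢ^∨⟩ ≥ 0` whenever `ℓ(sᵢ w) > ℓ(w)`; one proves it by splitting off from
`w` its maximal left factor in a rank-two parabolic subgroup, where the claim is a calculation.  So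
a strictly negative coordinate of `w v` exhibits a left descent of `w`.  Peeling these off shows
that an `E`-positive element `w` is determined by the weight `w v`, and that a word whose letters
successively lower the weight `v` is reduced with `E`-positive product.  For `F₄` it remains to
observe that the 24 words are lowering and reach each weight of the orbit of `v` exactly once.
-/

section CoxeterGroup

variable {B W : Type*} [Group W] {M : CoxeterMatrix B}

section Dihedral

variable (cs : CoxeterSystem M W)

/-- The alternating product `sᵢ sⱼ sᵢ ⋯` of `k` simple generators, beginning with `sᵢ`.  It is the
inverse of the product of Mathlib's `CoxeterSystem.alternatingWord j i k`, whose *last* letter is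
prescribed. -/
def alternatingProd (i j : B) : ℕ → W
  | 0 => 1
  | k + 1 => cs.simple i * alternatingProd j i k

theorem alternatingProd_eq_inv_wordProd (i j : B) (k : ℕ) :
    alternatingProd cs i j k = (cs.wordProd (CoxeterSystem.alternatingWord j i k))⁻¹ := by
  induction k generalizing i j with
  | zero => simp [alternatingProd, CoxeterSystem.alternatingWord]
  | succ k ih =>
    rw [alternatingProd, ih, CoxeterSystem.alternatingWord_succ, cs.wordProd_concat, mul_inv_rev,
      cs.inv_simple]

theorem alternatingProd_coxeterMatrix_comm (i j : B) :
    alternatingProd cs i j (M i j) = alternatingProd cs j i (M i j) := by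
  rw [alternatingProd_eq_inv_wordProd, alternatingProd_eq_inv_wordProd, M.symmetric i j,
    ← CoxeterSystem.braidWord, cs.wordProd_braidWord_eq, CoxeterSystem.braidWord, M.symmetric i j]

theorem length_alternatingProd_le (i j : B) (k : ℕ) :
    cs.length (alternatingProd cs i j k) ≤ k := by
  rw [alternatingProd_eq_inv_wordProd, cs.length_inv]
  exact (cs.length_wordProd_le _).trans_eq (CoxeterSystem.length_alternatingWord ..)

theorem exists_eq_alternatingProd_mul {w : W} {i : B} (hi : ¬ cs.IsLeftDescent w i) (j : B) :
    ∃ k v, w = alternatingProd cs j i k * v ∧ cs.length w = k + cs.length v ∧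
      ¬ cs.IsLeftDescent v i ∧ ¬ cs.IsLeftDescent v j ∧ (M i j ≠ 0 → k < M i j) := by
  induction hn : cs.length w using Nat.strong_induction_on generalizing w i j with
  | _ n ih =>
    subst hn
    by_cases hj : cs.IsLeftDescent w j
    · obtain ⟨k, v, hw, hlen, hvj, hvi, hk⟩ :=
        ih _ hj (cs.isLeftDescent_iff_not_isLeftDescent_mul.mp hj) i rfl
      have hw' : w = alternatingProd cs j i (k + 1) * v := by
        rw [alternatingProd, mul_assoc, ← hw, cs.simple_mul_simple_cancel_left]
      have hlen' : cs.length w = k + 1 + cs.length v := by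
        have := cs.isLeftDescent_iff.mp hj
        lia
      refine ⟨k + 1, v, hw', hlen', hvi, hvj, fun hM => ?_⟩
      rw [M.symmetric j i] at hk
      refine lt_of_le_of_ne (hk hM) fun hkM => hi ?_
      have hbraid : cs.simple i * w = alternatingProd cs j i k * v := by
        rw [hw', hkM, ← alternatingProd_coxeterMatrix_comm, ← hkM, alternatingProd, mul_assoc,
          cs.simple_mul_simple_cancel_left]
      have hle := cs.length_mul_le (alternatingProd cs j i k) v
      have := length_alternatingProd_le cs j i k
      rw [CoxeterSystem.IsLeftDescent, hbraid]
      lia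
    · exact ⟨0, w, by simp [alternatingProd], by simp, hi, hj, Nat.pos_of_ne_zero⟩

end Dihedral

section WeightLattice

/-- The simple reflection `λ ↦ λ - ⟨λ, αᵢ^∨⟩ αᵢ` of the root system with Cartan matrix
`A i j = ⟨αᵢ, αⱼ^∨⟩`.  A weight `λ` is encoded by its coordinates `⟨λ, αⱼ^∨⟩` in the basis of
fundamental weights, so `αᵢ` is the `i`-th row of `A`. -/
def simpleReflection (A : Matrix B B ℤ) (i : B) : Module.End ℤ (B → ℤ) :=
  Module.preReflection (A i) (LinearMap.proj i)

theorem simpleReflection_apply (A : Matrix B B ℤ) (i : B) (v : B → ℤ) (k : B) :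
    simpleReflection A i v k = v k - v i * A i k := by
  simp [simpleReflection, Module.preReflection_apply]

theorem simpleReflection_eq_self (A : Matrix B B ℤ) {i : B} {v : B → ℤ} (hi : v i = 0) :
    simpleReflection A i v = v := by
  ext k
  rw [simpleReflection_apply, hi, zero_mul, sub_zero]

/-- `A` is an integral Cartan matrix whose Weyl group has Coxeter matrix `M`, all entries of `M`
being finite.  The pairs in `mul_mem` are `(m, 4 cos² (π / m))`. -/
structure IsCartanMatrixOf (A : Matrix B B ℤ) (M : CoxeterMatrix B) : Prop where
  diag (i : B) : A i i = 2
  nonpos (i j : B) : i ≠ j → A i j ≤ 0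
  zero_symm (i j : B) : A i j = 0 → A j i = 0
  mul_mem (i j : B) : i ≠ j →
    (M i j, A i j * A j i) ∈ ([(2, 0), (3, 1), (4, 2), (6, 3)] : List (ℕ × ℤ))

namespace IsCartanMatrixOf

variable {A : Matrix B B ℤ} (hA : IsCartanMatrixOf A M)
include hA

theorem rankTwo_cases {i j : B} (hij : i ≠ j) :
    (M i j = 2 ∧ A i j = 0 ∧ A j i = 0) ∨ (M i j = 3 ∧ A i j = -1 ∧ A j i = -1) ∨
    (M i j = 4 ∧ (A i j = -1 ∧ A j i = -2 ∨ A i j = -2 ∧ A j i = -1)) ∨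
    (M i j = 6 ∧ (A i j = -1 ∧ A j i = -3 ∨ A i j = -3 ∧ A j i = -1)) := by
  have hneg := hA.nonpos i j hij
  have hneg' := hA.nonpos j i hij.symm
  have hzero := hA.zero_symm i j
  have hzero' := hA.zero_symm j i
  have hmul := hA.mul_mem i j hij
  simp only [List.mem_cons, Prod.mk.injEq, List.not_mem_nil, or_false] at hmul
  have hbound : -3 ≤ A i j := by
    by_contra! hlt
    obtain h | h := hneg'.lt_or_eq
    · have : 4 ≤ A i j * A j i := by nlinarith
      lia
    · have := hzero' h
      lia
  generalize A i j = a at *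
  interval_cases a <;> lia

theorem simpleReflection_apply_self (i : B) (v : B → ℤ) : simpleReflection A i v i = -v i := by
  rw [simpleReflection_apply, hA.diag]
  ring

theorem isLiftable_simpleReflection : M.IsLiftable (simpleReflection A) := by
  intro i j
  have hi := hA.diag i
  have hj := hA.diag j
  refine LinearMap.ext fun v => funext fun k => ?_
  obtain rfl | hij := eq_or_ne i j
  · simp only [M.diagonal, pow_one, Module.End.mul_apply, simpleReflection_apply, hi,
      Module.End.one_apply]
    ring
  · rcases hA.rankTwo_cases hij with ⟨hm, h, h'⟩ | ⟨hm, h, h'⟩ | ⟨hm, ⟨h, h'⟩ | ⟨h, h'⟩⟩ |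
      ⟨hm, ⟨h, h'⟩ | ⟨h, h'⟩⟩ <;>
    · simp only [hm, pow_succ, pow_zero, one_mul, Module.End.mul_apply, simpleReflection_apply,
        hi, hj, h, h', Module.End.one_apply]
      ring

end IsCartanMatrixOf

end WeightLattice

section WeightRep

variable (cs : CoxeterSystem M W) {A : Matrix B B ℤ} (hA : IsCartanMatrixOf A M)

/-- The representation of the Coxeter group on the weight lattice, in which the simple generators
act by the simple reflections of the Cartan matrix `A`. -/
noncomputable def weightRep : Representation ℤ W (B → ℤ) :=
  cs.lift ⟨simpleReflection A, hA.isLiftable_simpleReflection⟩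

theorem weightRep_simple (i : B) : weightRep cs hA (cs.simple i) = simpleReflection A i :=
  cs.lift_apply_simple hA.isLiftable_simpleReflection i

theorem weightRep_simple_mul (i : B) (w : W) (v : B → ℤ) :
    weightRep cs hA (cs.simple i * w) v = simpleReflection A i (weightRep cs hA w v) := by
  rw [map_mul, weightRep_simple, Module.End.mul_apply]

theorem weightRep_simple_mul_apply_self (i : B) (w : W) (v : B → ℤ) :
    weightRep cs hA (cs.simple i * w) v i = -weightRep cs hA w v i := by
  rw [weightRep_simple_mul, hA.simpleReflection_apply_self]

theorem weightRep_mul_simple {j : B} {v : B → ℤ} (hj : v j = 0) (w : W) :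
    weightRep cs hA (w * cs.simple j) v = weightRep cs hA w v := by
  rw [map_mul, weightRep_simple, Module.End.mul_apply, simpleReflection_eq_self A hj]

theorem weightRep_alternatingProd_apply_nonneg {i j : B} (hij : i ≠ j) {v : B → ℤ}
    (hi : 0 ≤ v i) (hj : 0 ≤ v j) {k : ℕ} (hk : k < M i j) :
    0 ≤ weightRep cs hA (alternatingProd cs j i k) v i := by
  have hdi := hA.diag i
  have hdj := hA.diag j
  rcases hA.rankTwo_cases hij with ⟨hm, h, h'⟩ | ⟨hm, h, h'⟩ | ⟨hm, ⟨h, h'⟩ | ⟨h, h'⟩⟩ |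
      ⟨hm, ⟨h, h'⟩ | ⟨h, h'⟩⟩ <;> rw [hm] at hk <;> interval_cases k <;>
  · simp only [alternatingProd, map_mul, map_one, Module.End.mul_apply, weightRep_simple,
      simpleReflection_apply, hdi, hdj, h, h', Module.End.one_apply]
    lia

/-- Tits' lemma, for dominant weights. -/
theorem weightRep_apply_nonneg_of_not_isLeftDescent {v : B → ℤ} (hv : 0 ≤ v) {w : W} {i : B}
    (hi : ¬ cs.IsLeftDescent w i) : 0 ≤ weightRep cs hA w v i := by
  induction hn : cs.length w using Nat.strong_induction_on generalizing w i with
  | _ n ih =>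
    subst hn
    obtain rfl | hw := eq_or_ne w 1
    · simpa using hv i
    obtain ⟨j, hj⟩ := cs.exists_leftDescent_of_ne_one hw
    have hij : i ≠ j := by
      rintro rfl
      exact hi hj
    obtain ⟨k, u, rfl, hlen, hui, huj, hk⟩ := exists_eq_alternatingProd_mul cs hi j
    have hk_pos : 0 < k := by
      refine Nat.pos_of_ne_zero ?_
      rintro rfl
      exact huj (by simpa [alternatingProd] using hj)
    have hM : M i j ≠ 0 := by
      have := hA.rankTwo_cases hij
      lia
    rw [map_mul, Module.End.mul_apply]
    exact weightRep_alternatingProd_apply_nonneg cs hA hij (ih _ (by lia) hui rfl)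
      (ih _ (by lia) huj rfl) (hk hM)

theorem weightRep_apply_nonpos_of_isLeftDescent {v : B → ℤ} (hv : 0 ≤ v) {w : W} {i : B}
    (hi : cs.IsLeftDescent w i) : weightRep cs hA w v i ≤ 0 := by
  have := weightRep_apply_nonneg_of_not_isLeftDescent cs hA hv
    (cs.isLeftDescent_iff_not_isLeftDescent_mul.mp hi)
  rwa [weightRep_simple_mul_apply_self, neg_nonneg] at this

theorem isLeftDescent_of_weightRep_apply_neg {v : B → ℤ} (hv : 0 ≤ v) {w : W} {i : B}
    (hi : weightRep cs hA w v i < 0) : cs.IsLeftDescent w i := by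
  by_contra h
  exact hi.not_ge (weightRep_apply_nonneg_of_not_isLeftDescent cs hA hv h)

end WeightRep

section PositiveElements

variable (cs : CoxeterSystem M W)

/-- The `E`-positive elements `W^{E+}`, that is, the minimal representatives of the left cosets of
the parabolic subgroup generated by the `sⱼ` with `j ∈ E`. -/
def positiveElements (E : Set B) : Set W :=
  {w | ∀ j ∈ E, ¬ cs.IsRightDescent w j}

theorem one_mem_positiveElements (E : Set B) : 1 ∈ positiveElements cs E :=
  fun j _ => cs.not_isRightDescent_one j

theorem simple_mul_mem_positiveElements {E : Set B} {w : W} (hw : w ∈ positiveElements cs E)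
    {i : B} (hi : cs.IsLeftDescent w i) : cs.simple i * w ∈ positiveElements cs E := by
  intro j hj hdesc
  apply hw j hj
  have hle := cs.length_mul_le (cs.simple i) (cs.simple i * w * cs.simple j)
  rw [cs.length_simple, mul_assoc, cs.simple_mul_simple_cancel_left, ← mul_assoc] at hle
  rw [cs.isLeftDescent_iff] at hi
  rw [CoxeterSystem.IsRightDescent] at hdesc ⊢
  lia

variable {A : Matrix B B ℤ} (hA : IsCartanMatrixOf A M)

theorem eq_one_of_mem_positiveElements_of_weightRep_nonneg {v : B → ℤ} (hv : 0 ≤ v) {w : W}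
    (hw : w ∈ positiveElements cs {i | v i = 0}) (hwv : 0 ≤ weightRep cs hA w v) : w = 1 := by
  induction hn : cs.length w using Nat.strong_induction_on generalizing w with
  | _ n ih =>
    subst hn
    by_contra hne
    obtain ⟨i, hi⟩ := cs.exists_leftDescent_of_ne_one hne
    have hwvi : weightRep cs hA w v i = 0 :=
      (weightRep_apply_nonpos_of_isLeftDescent cs hA hv hi).antisymm (hwv i)
    have hfix : weightRep cs hA (cs.simple i * w) v = weightRep cs hA w v := by
      rw [weightRep_simple_mul, simpleReflection_eq_self A hwvi]
    have hw_eq : w = cs.simple i := by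
      have hone := ih _ hi (simple_mul_mem_positiveElements cs hw hi) (hfix ▸ hwv) rfl
      rw [← cs.simple_mul_simple_cancel_left (w := w) i, hone, mul_one]
    have hvi : v i = 0 := by
      rwa [← hfix, hw_eq, cs.simple_mul_simple_self, map_one, Module.End.one_apply] at hwvi
    exact hw i hvi (by simp [hw_eq, CoxeterSystem.IsRightDescent])

theorem injOn_weightRep_positiveElements {v : B → ℤ} (hv : 0 ≤ v) :
    Set.InjOn (fun w => weightRep cs hA w v) (positiveElements cs {i | v i = 0}) := by
  intro w hw w' hw' (heq : weightRep cs hA w v = weightRep cs hA w' v)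
  induction hn : cs.length w using Nat.strong_induction_on generalizing w w' with
  | _ n ih =>
    subst hn
    by_cases hdom : 0 ≤ weightRep cs hA w v
    · rw [eq_one_of_mem_positiveElements_of_weightRep_nonneg cs hA hv hw hdom,
        eq_one_of_mem_positiveElements_of_weightRep_nonneg cs hA hv hw' (heq ▸ hdom)]
    · obtain ⟨i, hneg⟩ : ∃ i, weightRep cs hA w v i < 0 := by
        simpa [Pi.le_def] using hdom
      have hi := isLeftDescent_of_weightRep_apply_neg cs hA hv hneg
      have hi' := isLeftDescent_of_weightRep_apply_neg cs hA hv (heq ▸ hneg)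
      refine mul_left_cancel (ih _ hi (simple_mul_mem_positiveElements cs hw hi)
        (simple_mul_mem_positiveElements cs hw' hi') ?_ rfl)
      rw [weightRep_simple_mul, weightRep_simple_mul, heq]

end PositiveElements

section LoweringWords

/-- The image of the weight `v` under the product of the simple reflections of a word. -/
def wordWeight (A : Matrix B B ℤ) (v : B → ℤ) (ω : List B) : B → ℤ :=
  ω.foldr (fun i => simpleReflection A i) v

theorem wordWeight_cons (A : Matrix B B ℤ) (v : B → ℤ) (i : B) (ω : List B) :
    wordWeight A v (i :: ω) = simpleReflection A i (wordWeight A v ω) :=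
  rfl

/-- Each letter of the word, from right to left, strictly lowers the weight that the letters to its
right make of `v`, that is, subtracts a positive multiple of a simple root from it. -/
def IsLowering (A : Matrix B B ℤ) (v : B → ℤ) : List B → Prop
  | [] => True
  | i :: ω => 0 < wordWeight A v ω i ∧ IsLowering A v ω

instance decidablePredIsLowering (A : Matrix B B ℤ) (v : B → ℤ) : DecidablePred (IsLowering A v)
  | [] => isTrue trivial
  | _ :: ω =>
    have := decidablePredIsLowering A v ω
    inferInstanceAs (Decidable (_ ∧ _))

variable (cs : CoxeterSystem M W) {A : Matrix B B ℤ} (hA : IsCartanMatrixOf A M)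

theorem weightRep_wordProd (v : B → ℤ) (ω : List B) :
    weightRep cs hA (cs.wordProd ω) v = wordWeight A v ω := by
  induction ω with
  | nil => simp [wordWeight]
  | cons i ω ih => rw [cs.wordProd_cons, weightRep_simple_mul, ih, wordWeight_cons]

include hA in
theorem not_isLeftDescent_wordProd {v : B → ℤ} (hv : 0 ≤ v) {ω : List B} {i : B}
    (hi : 0 < wordWeight A v ω i) : ¬ cs.IsLeftDescent (cs.wordProd ω) i := fun h =>
  (weightRep_apply_nonpos_of_isLeftDescent cs hA hv h).not_gt (by rwa [weightRep_wordProd])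

include hA in
theorem isReduced_of_isLowering {v : B → ℤ} (hv : 0 ≤ v) {ω : List B} (hω : IsLowering A v ω) :
    cs.IsReduced ω := by
  induction ω with
  | nil => simp [CoxeterSystem.IsReduced]
  | cons i ω ih =>
    obtain ⟨hi, hω⟩ := hω
    have hlen := cs.not_isLeftDescent_iff.mp (not_isLeftDescent_wordProd cs hA hv hi)
    rw [CoxeterSystem.IsReduced, cs.wordProd_cons, hlen, (ih hω).eq, List.length_cons]

include hA in
theorem wordProd_mem_positiveElements_of_isLowering {v : B → ℤ} (hv : 0 ≤ v) {ω : List B}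
    (hω : IsLowering A v ω) : cs.wordProd ω ∈ positiveElements cs {i | v i = 0} := by
  induction ω with
  | nil => simpa using one_mem_positiveElements cs _
  | cons i ω ih =>
    obtain ⟨hi, hω⟩ := hω
    intro j hj hdesc
    have hneg : weightRep cs hA (cs.simple i * (cs.wordProd ω * cs.simple j)) v i < 0 := by
      rw [weightRep_simple_mul_apply_self, weightRep_mul_simple cs hA hj, weightRep_wordProd]
      lia
    have hdesc' := cs.isLeftDescent_iff.mp (isLeftDescent_of_weightRep_apply_neg cs hA hv hneg)
    have hlen := cs.not_isLeftDescent_iff.mp (not_isLeftDescent_wordProd cs hA hv hi)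
    apply ih hω j hj
    rw [CoxeterSystem.IsRightDescent, cs.wordProd_cons, mul_assoc] at hdesc
    rw [cs.simple_mul_simple_cancel_left] at hdesc'
    rw [CoxeterSystem.IsRightDescent]
    lia

variable {L : List (List B)} {v : B → ℤ}

theorem exists_mem_weightRep_eq_wordWeight (hnil : [] ∈ L)
    (horbit : ∀ ω ∈ L, ∀ i, ∃ ω' ∈ L, wordWeight A v (i :: ω) = wordWeight A v ω') (w : W) :
    ∃ ω ∈ L, weightRep cs hA w v = wordWeight A v ω := by
  induction w using cs.simple_induction_left with
  | one => exact ⟨[], hnil, by simp [wordWeight]⟩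
  | mul_simple_left w i ih =>
    obtain ⟨ω, hω, heq⟩ := ih
    obtain ⟨ω', hω', heq'⟩ := horbit ω hω i
    exact ⟨ω', hω', by rw [weightRep_simple_mul, heq, ← heq', wordWeight_cons]⟩

include hA in
theorem positiveElements_eq_setOf_wordProd (hv : 0 ≤ v) (hlow : ∀ ω ∈ L, IsLowering A v ω)
    (hnil : [] ∈ L)
    (horbit : ∀ ω ∈ L, ∀ i, ∃ ω' ∈ L, wordWeight A v (i :: ω) = wordWeight A v ω') :
    positiveElements cs {i | v i = 0} = {w | ∃ ω ∈ L, w = cs.wordProd ω} := by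
  ext w
  constructor
  · intro hw
    obtain ⟨ω, hω, heq⟩ := exists_mem_weightRep_eq_wordWeight cs hA hnil horbit w
    have hω_pos := wordProd_mem_positiveElements_of_isLowering cs hA hv (hlow ω hω)
    exact ⟨ω, hω, injOn_weightRep_positiveElements cs hA hv hw hω_pos
      (heq.trans (weightRep_wordProd cs hA v ω).symm)⟩
  · rintro ⟨ω, hω, rfl⟩
    exact wordProd_mem_positiveElements_of_isLowering cs hA hv (hlow ω hω)

include hA in
theorem nodup_map_wordProd_of_nodup_map_wordWeight (h : (L.map (wordWeight A v)).Nodup) :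
    (L.map cs.wordProd).Nodup := by
  refine List.Nodup.of_map (fun w => weightRep cs hA w v) ?_
  rw [List.map_map]
  exact (List.map_congr_left fun ω _ => (weightRep_wordProd cs hA v ω).symm) ▸ h

end LoweringWords

end CoxeterGroup

namespace F4PositiveWords

/-- The fundamental weight of `F₄` dual to the simple coroot of `α₁`, which is fixed by the simple
reflections in `α₂`, `α₃` and `α₄`. -/
def fundamentalWeight : Fin 4 → ℤ := Pi.single 0 1

theorem fundamentalWeight_nonneg : 0 ≤ fundamentalWeight :=
  Pi.single_nonneg.mpr zero_le_one

theorem fundamentalWeight_eq_zero_iff : ∀ i, fundamentalWeight i = 0 ↔ i ≠ 0 := by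
  decide

theorem isCartanMatrixOf_F₄ {M : CoxeterMatrix (Fin 4)}
    (hM : M 0 1 = 3 ∧ M 1 2 = 4 ∧ M 2 3 = 3 ∧ M 0 2 = 2 ∧ M 0 3 = 2 ∧ M 1 3 = 2) :
    IsCartanMatrixOf CartanMatrix.F₄ M where
  diag := CartanMatrix.F₄_diag
  nonpos := CartanMatrix.F₄_off_diag_nonpos
  zero_symm i j := by
    fin_cases i <;> fin_cases j <;> decide
  mul_mem i j hij := by
    obtain ⟨h01, h12, h23, h02, h03, h13⟩ := hM
    wlog hlt : i < j generalizing i j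
    · rw [M.symmetric, mul_comm]
      exact this j i hij.symm (lt_of_le_of_ne (not_lt.mp hlt) hij.symm)
    fin_cases i <;> fin_cases j <;>
      first
      | exact absurd hlt (by decide)
      | simp [h01, h12, h23, h02, h03, h13, CartanMatrix.F₄]

theorem isLowering : ∀ ω ∈ F4PositiveWords,
    IsLowering CartanMatrix.F₄ fundamentalWeight ω := by
  decide +kernel

theorem exists_wordWeight_cons_eq : ∀ ω ∈ F4PositiveWords, ∀ i, ∃ ω' ∈ F4PositiveWords,
    wordWeight CartanMatrix.F₄ fundamentalWeight (i :: ω) =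
      wordWeight CartanMatrix.F₄ fundamentalWeight ω' := by
  decide +kernel

theorem nodup_map_wordWeight :
    (F4PositiveWords.map (wordWeight CartanMatrix.F₄ fundamentalWeight)).Nodup := by
  decide +kernel

end F4PositiveWords

/-- The `{2,3,4}`-positive elements of the Coxeter group of type `F₄`: the set
of `w` with no right descent in `{2,3,4}` is exactly the 24 pairwise distinct
elements given by the words of `F4PositiveWords`, and each of these words is
reduced.  Here the simple generator `sᵢ` (`1 ≤ i ≤ 4`) is `cs.simple (i - 1)`,
with Coxeter matrix `m(1,2) = 3`, `m(2,3) = 4`, `m(3,4) = 3` and all other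
off-diagonal entries `2`. -/
theorem F4_positive_weyl_group
    {W : Type*} [Group W]
    (M : CoxeterMatrix (Fin 4))
    (hM : M 0 1 = 3 ∧ M 1 2 = 4 ∧ M 2 3 = 3 ∧ M 0 2 = 2 ∧ M 0 3 = 2 ∧ M 1 3 = 2)
    (cs : CoxeterSystem M W) :
    ({w : W | ∀ i : Fin 4, i ≠ 0 → ¬ cs.IsRightDescent w i}
        = {w : W | ∃ ω ∈ F4PositiveWords, w = cs.wordProd ω}) ∧
    (F4PositiveWords.map cs.wordProd).Nodup ∧
    (∀ ω ∈ F4PositiveWords, cs.length (cs.wordProd ω) = ω.length) := by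
  have hA := F4PositiveWords.isCartanMatrixOf_F₄ hM
  have hv := F4PositiveWords.fundamentalWeight_nonneg
  have hlow := F4PositiveWords.isLowering
  refine ⟨?_, nodup_map_wordProd_of_nodup_map_wordWeight cs hA
    F4PositiveWords.nodup_map_wordWeight, fun ω hω => isReduced_of_isLowering cs hA hv (hlow ω hω)⟩
  have hpositive := positiveElements_eq_setOf_wordProd cs hA hv hlow List.mem_cons_self
    F4PositiveWords.exists_wordWeight_cons_eq
  simpa only [positiveElements, Set.mem_ofPred_eq, F4PositiveWords.fundamentalWeight_eq_zero_iff]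
    using hpositive
end

section
/- Let W be the Coxeter group of type E₆ with simple generators s₁, …, s₆ in the Bourbaki labeling: m(i,j) = 3 exactly for the pairs {1,3}, {3,4}, {4,5}, {5,6}, {2,4}, and m(i,j) = 2 for all other pairs i ≠ j; let ℓ be the length function. Write a word i₁i₂⋯iₘ for the product s_{i₁}s_{i₂}⋯s_{iₘ}. Then the set of elements w ∈ W having no right descent in {2, 3, 4, 5, 6} is exactly the 27 pairwise distinct elements given by the words: (empty word), 1, 31, 431, 2431, 5431, 52431, 65431, 452431, 265431, 3452431, 4265431, 13452431, 63452431, 54265431, 613452431, 354265431, 5613452431, 4354265431, 45613452431, 24354265431, 345613452431, 124354265431, 2345613452431, 42345613452431, 542345613452431, 6542345613452431; each of these words is reduced, and in particular the unique element of maximal length in this set has length 16. -/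
/-- The list of the 27 words (in the simple generators, `0`-indexed: the
generator `sᵢ` of the paper, Bourbaki labeling, is index `i - 1`) for the
`Z_e`-positive Weyl group of `E₆`: the words
`ε, 1, 31, 431, 2431, 5431, 52431, 65431, 452431, 265431, 3452431, 4265431,
13452431, 63452431, 54265431, 613452431, 354265431, 5613452431, 4354265431,
45613452431, 24354265431, 345613452431, 124354265431, 2345613452431,
42345613452431, 542345613452431, 6542345613452431`. -/
def E6PositiveWords : List (List (Fin 6)) :=
  [[], [0],
  [2, 0], [3, 2, 0],
  [1, 3, 2, 0], [4, 3, 2, 0],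
  [4, 1, 3, 2, 0], [5, 4, 3, 2, 0],
  [3, 4, 1, 3, 2, 0], [1, 5, 4, 3, 2, 0],
  [2, 3, 4, 1, 3, 2, 0], [3, 1, 5, 4, 3, 2, 0],
  [0, 2, 3, 4, 1, 3, 2, 0], [5, 2, 3, 4, 1, 3, 2, 0],
  [4, 3, 1, 5, 4, 3, 2, 0], [5, 0, 2, 3, 4, 1, 3, 2, 0],
  [2, 4, 3, 1, 5, 4, 3, 2, 0], [4, 5, 0, 2, 3, 4, 1, 3, 2, 0],
  [3, 2, 4, 3, 1, 5, 4, 3, 2, 0], [3, 4, 5, 0, 2, 3, 4, 1, 3, 2, 0],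
  [1, 3, 2, 4, 3, 1, 5, 4, 3, 2, 0], [2, 3, 4, 5, 0, 2, 3, 4, 1, 3, 2, 0],
  [0, 1, 3, 2, 4, 3, 1, 5, 4, 3, 2, 0], [1, 2, 3, 4, 5, 0, 2, 3, 4, 1, 3, 2, 0],
  [3, 1, 2, 3, 4, 5, 0, 2, 3, 4, 1, 3, 2, 0],
  [4, 3, 1, 2, 3, 4, 5, 0, 2, 3, 4, 1, 3, 2, 0],
  [5, 4, 3, 1, 2, 3, 4, 5, 0, 2, 3, 4, 1, 3, 2, 0]]

/-!
Let `s_i` act on integral weights by `c ↦ c - c_i α_i`, and let `μ` be a dominant weight all of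
whose translates have coordinates in `{-1, 0, 1}` (a minuscule weight). Building up a word from
the right, call it minuscule if each letter `i` is applied to a weight with `i`-th coordinate `1`.
A minuscule word whose weight has `i`-th coordinate `-1` can be rewritten, by commutations alone,
to begin with `i`: were its first letter a neighbour of `i`, the preceding weight would have a
coordinate `-2`. If instead the coordinate is `0`, commutations and braid moves carry `s_i`
through the word to a simple reflection fixing `μ`. So every element is the product of a minuscule
word and of an element of the parabolic subgroup fixing `μ`, with no increase in length: the
minuscule words are reduced, and they represent the elements without right descent in that
subgroup, one for each weight in the orbit of `μ`. For `E₆` and the first fundamental weight the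
orbit has `27` elements.
-/

section SimpleReflections

variable {B W : Type*} [Group W] {M : CoxeterMatrix B} (cs : CoxeterSystem M W) {i j : B}

lemma simple_comm (h : M i j = 2) :
    cs.simple i * cs.simple j = cs.simple j * cs.simple i := by
  simpa [CoxeterSystem.braidWord, CoxeterSystem.alternatingWord, M.symmetric j i, h,
    cs.wordProd_cons] using cs.wordProd_braidWord_eq i j

lemma simple_braid (h : M i j = 3) :
    cs.simple i * (cs.simple j * cs.simple i) = cs.simple j * (cs.simple i * cs.simple j) := by
  simpa [CoxeterSystem.braidWord, CoxeterSystem.alternatingWord, M.symmetric j i, h,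
    cs.wordProd_cons] using (cs.wordProd_braidWord_eq i j).symm

/-- The `E`-positive Weyl group `W^{E+}`, described through right descents: the elements `w` for
which `w αᵢ` is a positive root for all `i ∈ E`. -/
def positiveWeylGroup (E : Set B) : Set W :=
  {w | ∀ i ∈ E, ¬ cs.IsRightDescent w i}

end SimpleReflections

section Weights

variable {B : Type*} (M : CoxeterMatrix B)

/-- A Coxeter matrix is simply laced if any two distinct simple reflections commute or satisfy the
braid relation of length `3`. -/
def IsSimplyLaced : Prop :=
  Pairwise fun i j => M i j = 2 ∨ M i j = 3

/-- The simple root `αᵢ` of a simply laced Coxeter matrix, in coordinates with respect to the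
fundamental weights: the `i`-th row of the Cartan matrix. -/
def simpleRoot (i j : B) : ℤ :=
  match M i j with
  | 1 => 2
  | 3 => -1
  | _ => 0

/-- The action of the simple reflection `sᵢ` on weights, in coordinates with respect to the
fundamental weights, so that `c i` is the pairing of the weight `c` with the coroot `αᵢ^∨`. -/
def weightReflection (i : B) (c : B → ℤ) : B → ℤ :=
  fun j => c j - c i * simpleRoot M i j

/-- The image of the weight `μ` under the product of the simple reflections in `ω`. -/
def weightOfWord (μ : B → ℤ) (ω : List B) : B → ℤ :=
  ω.foldr (weightReflection M) μ

/-- Stembridge's `μ`-minuscule words: read from the right, each letter `i` lowers the current weight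
by exactly the simple root `αᵢ`. -/
def IsMinusculeWord (μ : B → ℤ) : List B → Prop
  | [] => True
  | i :: ω => weightOfWord M μ ω i = 1 ∧ IsMinusculeWord μ ω

instance IsMinusculeWord.decidable (μ : B → ℤ) : DecidablePred (IsMinusculeWord M μ)
  | [] => inferInstanceAs (Decidable True)
  | i :: ω =>
    haveI := IsMinusculeWord.decidable μ ω
    inferInstanceAs (Decidable (weightOfWord M μ ω i = 1 ∧ IsMinusculeWord M μ ω))

/-- Dominant minuscule weights: all pairings of the weights in the orbit with the simple coroots,
hence with all coroots, lie in `{-1, 0, 1}`. -/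
structure IsDominantMinuscule (μ : B → ℤ) : Prop where
  nonneg (i : B) : 0 ≤ μ i
  abs_weightOfWord_le_one (ω : List B) (i : B) : |weightOfWord M μ ω i| ≤ 1

variable {M} {i j : B} {c μ : B → ℤ}

lemma weightReflection_apply_self : weightReflection M i c i = -c i := by
  simp only [weightReflection, simpleRoot, M.diagonal]
  ring

lemma weightReflection_apply_of_eq_two (h : M i j = 2) : weightReflection M i c j = c j := by
  simp [weightReflection, simpleRoot, h]

lemma weightReflection_apply_of_eq_three (h : M i j = 3) :
    weightReflection M i c j = c j + c i := by
  simp [weightReflection, simpleRoot, h]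

lemma weightReflection_eq_self (h : c i = 0) : weightReflection M i c = c := by
  funext k
  simp [weightReflection, h]

variable (M i) in
lemma weightReflection_involutive : Function.Involutive (weightReflection M i) := fun c => by
  funext k
  change weightReflection M i c k - weightReflection M i c i * simpleRoot M i k = c k
  rw [weightReflection_apply_self, weightReflection]
  ring

lemma weightReflection_comm (h : M i j = 2) :
    weightReflection M i (weightReflection M j c) =
      weightReflection M j (weightReflection M i c) := by
  have h' : M j i = 2 := M.symmetric j i ▸ h
  funext k
  simp only [weightReflection, simpleRoot, h, h']
  ring

lemma weightReflection_braid (h : M i j = 3) :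
    weightReflection M i (weightReflection M j (weightReflection M i c)) =
      weightReflection M j (weightReflection M i (weightReflection M j c)) := by
  have h' : M j i = 3 := M.symmetric j i ▸ h
  funext k
  simp only [weightReflection, simpleRoot, h, h', M.diagonal]
  ring

lemma IsSimplyLaced.isLiftable_weightReflection (hM : IsSimplyLaced M) :
    M.IsLiftable (G := Function.End (B → ℤ)) (weightReflection M) := by
  intro i j
  funext c
  rcases eq_or_ne i j with rfl | hij
  · rw [M.diagonal, pow_one]
    exact weightReflection_involutive M i c
  rcases hM hij with h | h <;> rw [h]
  · change weightReflection M i (weightReflection M j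
      (weightReflection M i (weightReflection M j c))) = c
    rw [weightReflection_comm h, weightReflection_involutive M i, weightReflection_involutive M j]
  · change weightReflection M i (weightReflection M j (weightReflection M i
      (weightReflection M j (weightReflection M i (weightReflection M j c))))) = c
    rw [weightReflection_braid h, weightReflection_involutive M j, weightReflection_involutive M i,
      weightReflection_involutive M j]

lemma weightOfWord_cons (ω : List B) :
    weightOfWord M μ (i :: ω) = weightReflection M i (weightOfWord M μ ω) :=
  rfl

lemma weightOfWord_append (ω v : List B) :
    weightOfWord M μ (ω ++ v) = weightOfWord M (weightOfWord M μ v) ω :=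
  List.foldr_append

lemma weightOfWord_eq_self {v : List B} (hv : ∀ j ∈ v, μ j = 0) : weightOfWord M μ v = μ := by
  induction v with
  | nil => rfl
  | cons j v ih =>
    rw [List.forall_mem_cons] at hv
    rw [weightOfWord_cons, ih hv.2, weightReflection_eq_self hv.1]

lemma exists_mem_weightOfWord_eq {L : List (List B)} (hnil : [] ∈ L)
    (hcons : ∀ ω ∈ L, ∀ i, ∃ ω' ∈ L, weightOfWord M μ ω' = weightOfWord M μ (i :: ω))
    (η : List B) : ∃ ω ∈ L, weightOfWord M μ ω = weightOfWord M μ η := by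
  induction η with
  | nil => exact ⟨[], hnil, rfl⟩
  | cons i η ih =>
    obtain ⟨ω, hω, h⟩ := ih
    simpa only [weightOfWord_cons, h] using hcons ω hω i

lemma IsMinusculeWord.weightOfWord_cons_self {ω : List B} (h : IsMinusculeWord M μ (i :: ω)) :
    weightOfWord M μ (i :: ω) i = -1 := by
  rw [weightOfWord_cons, weightReflection_apply_self, h.1]

lemma IsSimplyLaced.weightOfWord_eq_of_wordProd_eq {W : Type*} [Group W] (hM : IsSimplyLaced M)
    (cs : CoxeterSystem M W) {ω ω' : List B} (h : cs.wordProd ω = cs.wordProd ω') :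
    weightOfWord M μ ω = weightOfWord M μ ω' := by
  have hf := hM.isLiftable_weightReflection
  have hlift (η : List B) :
      cs.lift (G := Function.End (B → ℤ)) ⟨_, hf⟩ (cs.wordProd η) μ = weightOfWord M μ η := by
    induction η with
    | nil => rw [cs.wordProd_nil, map_one]; rfl
    | cons i η ih =>
      rw [cs.wordProd_cons, map_mul, cs.lift_apply_simple hf]
      exact congrArg (weightReflection M i) ih
  rw [← hlift, h, hlift]

end Weights

namespace IsMinusculeWord

variable {B W : Type*} [Group W] {M : CoxeterMatrix B} {μ : B → ℤ} {ω : List B}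

lemma exists_cons_wordProd_eq (hω : IsMinusculeWord M μ ω) (hM : IsSimplyLaced M)
    (hμ : IsDominantMinuscule M μ) (cs : CoxeterSystem M W) {i : B}
    (hi : weightOfWord M μ ω i = -1) :
    ∃ ω', IsMinusculeWord M μ (i :: ω') ∧ (i :: ω').length = ω.length ∧
      cs.wordProd (i :: ω') = cs.wordProd ω := by
  induction ω with
  | nil =>
    have h_nonneg := hμ.nonneg i
    change μ i = -1 at hi
    lia
  | cons a ω ih =>
    obtain ⟨ha, hω'⟩ := hω
    rcases eq_or_ne a i with rfl | hai
    · exact ⟨ω, ⟨ha, hω'⟩, rfl, rfl⟩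
    rw [weightOfWord_cons] at hi
    rcases hM hai with hcomm | hadj
    · rw [weightReflection_apply_of_eq_two hcomm] at hi
      obtain ⟨ω', hiω', hlen, hprod⟩ := ih hω' hi
      have hcomm' : M i a = 2 := M.symmetric i a ▸ hcomm
      have ha' : weightOfWord M μ ω' a = 1 := by
        rw [← ha, ← hM.weightOfWord_eq_of_wordProd_eq cs hprod, weightOfWord_cons,
          weightReflection_apply_of_eq_two hcomm']
      refine ⟨a :: ω', ⟨?_, ha', hiω'.2⟩, by simpa using hlen, ?_⟩
      · rw [weightOfWord_cons, weightReflection_apply_of_eq_two hcomm, hiω'.1]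
      · rw [cs.wordProd_cons, cs.wordProd_cons, ← mul_assoc, simple_comm cs hcomm',
          mul_assoc, ← cs.wordProd_cons, hprod, cs.wordProd_cons]
    · rw [weightReflection_apply_of_eq_three hadj, ha] at hi
      have h_bound := (abs_le.1 (hμ.abs_weightOfWord_le_one ω i)).1
      lia

lemma exists_simple_mul_wordProd_eq (hω : IsMinusculeWord M μ ω) (hM : IsSimplyLaced M)
    (hμ : IsDominantMinuscule M μ) (cs : CoxeterSystem M W) {i : B}
    (hi : weightOfWord M μ ω i = 0) :
    ∃ j, μ j = 0 ∧ cs.simple i * cs.wordProd ω = cs.wordProd ω * cs.simple j := by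
  induction hn : ω.length using Nat.strong_induction_on generalizing ω i with
  | _ n ih =>
  subst hn
  rcases ω with _ | ⟨a, ω⟩
  · exact ⟨i, hi, by simp⟩
  have hai : a ≠ i := by
    rintro rfl
    rw [hω.weightOfWord_cons_self] at hi
    lia
  obtain ⟨ha, hω'⟩ := hω
  rw [weightOfWord_cons] at hi
  rcases hM hai with hcomm | hadj
  · rw [weightReflection_apply_of_eq_two hcomm] at hi
    obtain ⟨j, hj, hprod⟩ := ih ω.length (by simp) hω' hi rfl
    refine ⟨j, hj, ?_⟩
    rw [cs.wordProd_cons, ← mul_assoc, ← simple_comm cs hcomm, mul_assoc, hprod,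
      mul_assoc]
  · rw [weightReflection_apply_of_eq_three hadj, ha] at hi
    obtain ⟨ω', hiω', hlen, hω'_prod⟩ := hω'.exists_cons_wordProd_eq hM hμ cs (i := i) (by lia)
    have ha' : weightOfWord M μ ω' a = 0 := by
      rw [← hM.weightOfWord_eq_of_wordProd_eq cs hω'_prod, weightOfWord_cons,
        weightReflection_apply_of_eq_three (M.symmetric i a ▸ hadj), hiω'.1] at ha
      lia
    obtain ⟨j, hj, hprod⟩ := ih ω'.length (by simp [← hlen]) hiω'.2 ha' rfl
    refine ⟨j, hj, ?_⟩
    calc cs.simple i * cs.wordProd (a :: ω)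
        = cs.simple i * (cs.simple a * cs.simple i) * cs.wordProd ω' := by
          simp only [cs.wordProd_cons, ← hω'_prod, mul_assoc]
      _ = cs.simple a * cs.simple i * (cs.simple a * cs.wordProd ω') := by
          rw [← simple_braid cs hadj]
          simp only [mul_assoc]
      _ = cs.wordProd (a :: ω) * cs.simple j := by
          simp only [hprod, cs.wordProd_cons, ← hω'_prod, mul_assoc]

lemma wordProd_eq_and_length_eq (hω : IsMinusculeWord M μ ω) (hM : IsSimplyLaced M)
    (hμ : IsDominantMinuscule M μ) (cs : CoxeterSystem M W) {ω' : List B}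
    (hω' : IsMinusculeWord M μ ω') (h : weightOfWord M μ ω = weightOfWord M μ ω') :
    cs.wordProd ω = cs.wordProd ω' ∧ ω.length = ω'.length := by
  induction ω generalizing ω' with
  | nil =>
    rcases ω' with _ | ⟨b, ω'⟩
    · exact ⟨rfl, rfl⟩
    have h_nonneg := hμ.nonneg b
    have hb : μ b = -1 := (congrFun h b).trans hω'.weightOfWord_cons_self
    lia
  | cons a ω ih =>
    have ha : weightOfWord M μ ω' a = -1 := h ▸ hω.weightOfWord_cons_self
    obtain ⟨ω'', haω'', hlen, hprod⟩ := hω'.exists_cons_wordProd_eq hM hμ cs ha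
    have hweight : weightOfWord M μ ω = weightOfWord M μ ω'' := by
      rw [← hM.weightOfWord_eq_of_wordProd_eq cs hprod] at h
      exact (weightReflection_involutive M a).injective h
    obtain ⟨ih_prod, ih_len⟩ := ih hω.2 haω''.2 hweight
    exact ⟨by rw [← hprod, cs.wordProd_cons, cs.wordProd_cons, ih_prod],
      by rw [← hlen, List.length_cons, List.length_cons, ih_len]⟩

end IsMinusculeWord

section Factorization

variable {B W : Type*} [Group W] {M : CoxeterMatrix B} {μ : B → ℤ}

lemma exists_minusculeWord_mul (hM : IsSimplyLaced M) (hμ : IsDominantMinuscule M μ)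
    (cs : CoxeterSystem M W) (η : List B) :
    ∃ ω v : List B, IsMinusculeWord M μ ω ∧ (∀ j ∈ v, μ j = 0) ∧
      cs.wordProd η = cs.wordProd (ω ++ v) ∧ (ω ++ v).length ≤ η.length := by
  induction η with
  | nil => exact ⟨[], [], trivial, by simp, rfl, le_rfl⟩
  | cons i η ih =>
    obtain ⟨ω, v, hω, hv, hprod, hlen⟩ := ih
    have hcases : weightOfWord M μ ω i = -1 ∨ weightOfWord M μ ω i = 0 ∨
        weightOfWord M μ ω i = 1 := by
      have h_bound := abs_le.1 (hμ.abs_weightOfWord_le_one ω i)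
      lia
    simp only [cs.wordProd_cons, hprod, cs.wordProd_append, List.length_append,
      List.length_cons] at hlen ⊢
    rcases hcases with hi | hi | hi
    · obtain ⟨ω', hω', hlen', hprod'⟩ := hω.exists_cons_wordProd_eq hM hμ cs hi
      refine ⟨ω', v, hω'.2, hv, ?_, by simp only [List.length_cons] at hlen'; lia⟩
      rw [← hprod', cs.wordProd_cons, ← mul_assoc, cs.simple_mul_simple_cancel_left]
    · obtain ⟨j, hj, hprod'⟩ := hω.exists_simple_mul_wordProd_eq hM hμ cs hi
      refine ⟨ω, j :: v, hω, List.forall_mem_cons.2 ⟨hj, hv⟩, ?_,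
        by simp only [List.length_cons]; lia⟩
      rw [cs.wordProd_cons, ← mul_assoc, hprod', mul_assoc]
    · exact ⟨i :: ω, v, ⟨hi, hω⟩, hv, by rw [cs.wordProd_cons, mul_assoc],
        by simp only [List.length_cons]; lia⟩

lemma IsMinusculeWord.length_le_length_wordProd {ω : List B} (hω : IsMinusculeWord M μ ω)
    (hM : IsSimplyLaced M) (hμ : IsDominantMinuscule M μ) (cs : CoxeterSystem M W) {η : List B}
    (h : weightOfWord M μ η = weightOfWord M μ ω) : ω.length ≤ cs.length (cs.wordProd η) := by
  obtain ⟨η', hred, hη'⟩ := cs.exists_isReduced (cs.wordProd η)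
  obtain ⟨ω', v, hω', hv, hprod, hlen⟩ := exists_minusculeWord_mul hM hμ cs η'
  have hweight : weightOfWord M μ ω = weightOfWord M μ ω' := by
    rw [← h, hM.weightOfWord_eq_of_wordProd_eq cs (hη'.trans hprod), weightOfWord_append,
      weightOfWord_eq_self hv]
  rw [hη', hred.eq, (hω.wordProd_eq_and_length_eq hM hμ cs hω' hweight).2]
  exact (List.length_append ▸ Nat.le_add_right _ _).trans hlen

theorem IsMinusculeWord.isReduced {ω : List B} (hω : IsMinusculeWord M μ ω)
    (hM : IsSimplyLaced M) (hμ : IsDominantMinuscule M μ) (cs : CoxeterSystem M W) :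
    cs.IsReduced ω :=
  (cs.length_wordProd_le ω).antisymm (hω.length_le_length_wordProd hM hμ cs rfl)

lemma IsMinusculeWord.wordProd_mem_positiveWeylGroup {ω : List B} (hω : IsMinusculeWord M μ ω)
    (hM : IsSimplyLaced M) (hμ : IsDominantMinuscule M μ) (cs : CoxeterSystem M W) :
    cs.wordProd ω ∈ positiveWeylGroup cs {j | μ j = 0} := by
  intro j hj
  have hweight : weightOfWord M μ (ω ++ [j]) = weightOfWord M μ ω := by
    rw [weightOfWord_append, weightOfWord_eq_self (List.forall_mem_singleton.2 hj)]
  have hle := hω.length_le_length_wordProd hM hμ cs hweight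
  rw [cs.wordProd_append, cs.wordProd_singleton] at hle
  rw [CoxeterSystem.IsRightDescent, (hω.isReduced hM hμ cs).eq]
  exact hle.not_gt

lemma exists_minusculeWord_of_mem_positiveWeylGroup (hM : IsSimplyLaced M)
    (hμ : IsDominantMinuscule M μ) (cs : CoxeterSystem M W) {w : W}
    (hw : w ∈ positiveWeylGroup cs {j | μ j = 0}) :
    ∃ ω, IsMinusculeWord M μ ω ∧ w = cs.wordProd ω := by
  obtain ⟨η, hred, rfl⟩ := cs.exists_isReduced w
  obtain ⟨ω, v, hω, hv, hprod, hlen⟩ := exists_minusculeWord_mul hM hμ cs η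
  rcases v.eq_nil_or_concat' with rfl | ⟨v, j, rfl⟩
  · exact ⟨ω, hω, by simpa using hprod⟩
  have hdescent : cs.IsRightDescent (cs.wordProd η) j := calc
    cs.length (cs.wordProd η * cs.simple j) = cs.length (cs.wordProd (ω ++ v)) := by
      rw [hprod, ← List.append_assoc, cs.wordProd_append _ [j], cs.wordProd_singleton,
        cs.simple_mul_simple_cancel_right]
    _ ≤ (ω ++ v).length := cs.length_wordProd_le _
    _ < (ω ++ (v ++ [j])).length := by simp
    _ ≤ cs.length (cs.wordProd η) := hlen.trans_eq hred.eq.symm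
  exact absurd hdescent (hw j (hv j (by simp)))

theorem positiveWeylGroup_eq_setOf_wordProd (hM : IsSimplyLaced M) (hμ : IsDominantMinuscule M μ)
    (cs : CoxeterSystem M W) {L : List (List B)} (hL : ∀ ω ∈ L, IsMinusculeWord M μ ω)
    (hcover : ∀ η, ∃ ω ∈ L, weightOfWord M μ ω = weightOfWord M μ η) :
    positiveWeylGroup cs {j | μ j = 0} = {w | ∃ ω ∈ L, w = cs.wordProd ω} := by
  ext w
  constructor
  · intro hw
    obtain ⟨η, hη, rfl⟩ := exists_minusculeWord_of_mem_positiveWeylGroup hM hμ cs hw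
    obtain ⟨ω, hω, h⟩ := hcover η
    exact ⟨ω, hω, (hη.wordProd_eq_and_length_eq hM hμ cs (hL ω hω) h.symm).1⟩
  · rintro ⟨ω, hω, rfl⟩
    exact (hL ω hω).wordProd_mem_positiveWeylGroup hM hμ cs

lemma IsSimplyLaced.nodup_map_wordProd (hM : IsSimplyLaced M) (cs : CoxeterSystem M W)
    {L : List (List B)} (hL : (L.map (weightOfWord M μ)).Nodup) : (L.map cs.wordProd).Nodup :=
  hL.of_map.map_on fun _ hω _ hω' h =>
    List.inj_on_of_nodup_map hL hω hω' (hM.weightOfWord_eq_of_wordProd_eq cs h)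

end Factorization

section E6

open CoxeterMatrix

lemma eq_E₆_of_apply_eq {M : CoxeterMatrix (Fin 6)}
    (hM : ∀ i j : Fin 6, i ≠ j →
      M i j = if ({i, j} : Finset (Fin 6)) ∈
          ({{0, 2}, {2, 3}, {3, 4}, {4, 5}, {1, 3}} : Finset (Finset (Fin 6)))
        then 3 else 2) : M = E₆ := by
  ext i j
  rcases eq_or_ne i j with rfl | hij
  · exact (M.diagonal i).trans (E₆.diagonal i).symm
  · rw [hM i j hij]
    fin_cases i <;> fin_cases j <;> first | contradiction | rfl

lemma isSimplyLaced_E₆ : IsSimplyLaced E₆ := by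
  intro i j hij
  fin_cases i <;> fin_cases j <;> simp [E₆] at hij ⊢

/-- The fundamental weight `ϖ₁` of `E₆`, the highest weight of a `27`-dimensional minuscule
representation; the index is shifted by `1` as in `E6PositiveWords`. -/
def E6FundamentalWeight : Fin 6 → ℤ :=
  Pi.single 0 1

local notation "ϖ₁" => E6FundamentalWeight

lemma E6FundamentalWeight_eq_zero_iff (i : Fin 6) : ϖ₁ i = 0 ↔ i ≠ 0 := by
  simp [E6FundamentalWeight, Pi.single_apply]

lemma isMinusculeWord_of_mem_E6PositiveWords :
    ∀ ω ∈ E6PositiveWords, IsMinusculeWord E₆ ϖ₁ ω := by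
  decide +kernel

lemma nodup_map_weightOfWord_E6PositiveWords :
    (E6PositiveWords.map (weightOfWord E₆ ϖ₁)).Nodup := by
  decide +kernel

lemma exists_mem_E6PositiveWords_weightOfWord_eq (η : List (Fin 6)) :
    ∃ ω ∈ E6PositiveWords, weightOfWord E₆ ϖ₁ ω = weightOfWord E₆ ϖ₁ η := by
  have hclosed : ∀ ω ∈ E6PositiveWords, ∀ i, ∃ ω' ∈ E6PositiveWords,
      weightOfWord E₆ ϖ₁ ω' = weightOfWord E₆ ϖ₁ (i :: ω) := by
    decide +kernel
  exact exists_mem_weightOfWord_eq (by simp [E6PositiveWords]) hclosed η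

lemma isDominantMinuscule_E6FundamentalWeight : IsDominantMinuscule E₆ ϖ₁ where
  nonneg := by decide
  abs_weightOfWord_le_one η i := by
    have habs : ∀ ω ∈ E6PositiveWords, ∀ i, |weightOfWord E₆ ϖ₁ ω i| ≤ 1 := by
      decide +kernel
    obtain ⟨ω, hω, h⟩ := exists_mem_E6PositiveWords_weightOfWord_eq η
    exact h ▸ habs ω hω i

lemma length_le_of_mem_E6PositiveWords : ∀ ω ∈ E6PositiveWords, ω.length ≤ 16 := by
  decide

lemma existsUnique_mem_E6PositiveWords_length_eq :
    ∃! ω, ω ∈ E6PositiveWords ∧ ω.length = 16 := by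
  simp only [ExistsUnique, and_imp, and_assoc]
  decide

end E6

/-- The `{2,…,6}`-positive elements of the Coxeter group of type `E₆` (Bourbaki
labeling): the set of `w` with no right descent in `{2,3,4,5,6}` is exactly the
27 pairwise distinct elements given by the words of `E6PositiveWords`; each of
these words is reduced, and the unique element of maximal length in this set
has length 16.  Here the simple generator `sᵢ` (`1 ≤ i ≤ 6`) is
`cs.simple (i - 1)`, with Coxeter matrix entries `3` exactly on the (0-indexed)
pairs `{0,2}, {2,3}, {3,4}, {4,5}, {1,3}` and `2` on the remaining
off-diagonal pairs. -/
theorem E6_positive_weyl_group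
    {W : Type*} [Group W]
    (M : CoxeterMatrix (Fin 6))
    (hM : ∀ i j : Fin 6, i ≠ j →
      M i j = if ({i, j} : Finset (Fin 6)) ∈
          ({{0, 2}, {2, 3}, {3, 4}, {4, 5}, {1, 3}} : Finset (Finset (Fin 6)))
        then 3 else 2)
    (cs : CoxeterSystem M W) :
    ({w : W | ∀ i : Fin 6, i ≠ 0 → ¬ cs.IsRightDescent w i}
        = {w : W | ∃ ω ∈ E6PositiveWords, w = cs.wordProd ω}) ∧
    (E6PositiveWords.map cs.wordProd).Nodup ∧
    (∀ ω ∈ E6PositiveWords, cs.length (cs.wordProd ω) = ω.length) ∧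
    (∀ w : W, (∀ i : Fin 6, i ≠ 0 → ¬ cs.IsRightDescent w i) → cs.length w ≤ 16) ∧
    (∃! w : W, (∀ i : Fin 6, i ≠ 0 → ¬ cs.IsRightDescent w i) ∧ cs.length w = 16) := by
  obtain rfl := eq_E₆_of_apply_eq hM
  have hμ := isDominantMinuscule_E6FundamentalWeight
  have hset : {w : W | ∀ i : Fin 6, i ≠ 0 → ¬ cs.IsRightDescent w i} =
      {w | ∃ ω ∈ E6PositiveWords, w = cs.wordProd ω} := by
    simpa only [positiveWeylGroup, Set.mem_ofPred_eq, E6FundamentalWeight_eq_zero_iff] using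
      positiveWeylGroup_eq_setOf_wordProd isSimplyLaced_E₆ hμ cs
        isMinusculeWord_of_mem_E6PositiveWords exists_mem_E6PositiveWords_weightOfWord_eq
  have hlength : ∀ ω ∈ E6PositiveWords, cs.length (cs.wordProd ω) = ω.length := fun ω hω =>
    (isMinusculeWord_of_mem_E6PositiveWords ω hω).isReduced isSimplyLaced_E₆ hμ cs
  refine ⟨hset, isSimplyLaced_E₆.nodup_map_wordProd cs nodup_map_weightOfWord_E6PositiveWords,
    hlength, fun w hw => ?_, ?_⟩
  · obtain ⟨ω, hω, rfl⟩ := hset.subset hw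
    exact (hlength ω hω).trans_le (length_le_of_mem_E6PositiveWords ω hω)
  · obtain ⟨ω₀, ⟨hω₀, hlen₀⟩, huniq⟩ := existsUnique_mem_E6PositiveWords_length_eq
    refine ⟨cs.wordProd ω₀, ⟨hset.superset ⟨ω₀, hω₀, rfl⟩, (hlength ω₀ hω₀).trans hlen₀⟩, ?_⟩
    rintro w ⟨hw, hlen⟩
    obtain ⟨ω, hω, rfl⟩ := hset.subset hw
    rw [huniq ω ⟨hω, (hlength ω hω).symm.trans hlen⟩]
end
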